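/- arXiv:1405.6672 — 2 statements merged into one kernel-verified Lean document; each statement's English description precedes it below -/
import Mathlib

section
/- Let F be a countable class of uniformly bounded measurable real-valued functions on a measurable space, P a probability measure, and P_n the empirical measure of n i.i.d. P-distributed observations. Suppose ω : F → [0,∞) satisfies Var_P(f) ≤ ω(f) for all f ∈ F, and suppose Φ is a sub-root function (nondecreasing with r ↦ Φ(r)/√r nonincreasing on (0,∞)) such that E sup_{f ∈ F, ω(f) ≤ r} |(P − P_n) f| ≤ Φ(r) for all r > 0. Let K > 0 and let r* be the unique positive solution of Φ(r) = r/(24K). Then for all x > 0, with probability at least 1 − e^{−x}, every f ∈ F satisfies P f − P_n f ≤ K^{−1} ( ω(f) + r* + (9K² + 16K sup_{g ∈ F} ‖g‖_∞) x / (4n) ). -/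
open MeasureTheory

/-!
Dividing the centred functions by `ω(f) + r`, with `r = r* + (9K² + 16K‖F‖_∞) x / (4n)`, reduces
the claim to the single event that the supremum of the normalised empirical process is at most
`1/K`. Since `ω(f) / (ω(f) + r)² ≤ 1 / (4r)`, this process has small variance. Its deviations
above the mean are controlled by the entropy method: tensorization of entropy, a modified
logarithmic Sobolev inequality in each coordinate, and Herbst's argument. Its mean is at most
`5 Φ(r) / r`, by peeling the class along `ω(f) ≈ 4ᵏ r` and summing the geometric series that the
sub-root property provides. The Chernoff bound at `λ = 3Kx/2` then closes the argument.
-/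

section BoundedMeasurable

variable {α β γ ι : Type*} [MeasurableSpace α] [MeasurableSpace β] [MeasurableSpace γ]

/-- Bounded measurable real-valued functions. All integrands below are of this kind, so that every
integral is a genuine one. -/
@[fun_prop]
structure BddMeasurable (f : β → ℝ) : Prop where
  measurable : Measurable f
  bounded : ∃ C, ∀ x, |f x| ≤ C

namespace BddMeasurable

variable {f g : β → ℝ}

lemma integrable (hf : BddMeasurable f) (μ : Measure β) [IsFiniteMeasure μ] : Integrable f μ :=
  let ⟨C, hC⟩ := hf.bounded
  .of_bound hf.measurable.aestronglyMeasurable C (.of_forall hC)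

@[fun_prop]
lemma const (c : ℝ) : BddMeasurable fun _ : β => c :=
  ⟨measurable_const, |c|, fun _ => le_rfl⟩

@[fun_prop]
lemma add (hf : BddMeasurable f) (hg : BddMeasurable g) : BddMeasurable fun x => f x + g x := by
  obtain ⟨C, hC⟩ := hf.bounded
  obtain ⟨D, hD⟩ := hg.bounded
  exact ⟨hf.measurable.add hg.measurable, C + D,
    fun x => (abs_add_le _ _).trans (add_le_add (hC x) (hD x))⟩

@[fun_prop]
lemma mul (hf : BddMeasurable f) (hg : BddMeasurable g) : BddMeasurable fun x => f x * g x := by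
  obtain ⟨C, hC⟩ := hf.bounded
  obtain ⟨D, hD⟩ := hg.bounded
  refine ⟨hf.measurable.mul hg.measurable, C * D, fun x => ?_⟩
  rw [abs_mul]
  exact mul_le_mul (hC x) (hD x) (abs_nonneg _) ((abs_nonneg _).trans (hC x))

@[fun_prop]
lemma sub (hf : BddMeasurable f) (hg : BddMeasurable g) : BddMeasurable fun x => f x - g x := by
  simpa only [neg_one_mul, ← sub_eq_add_neg] using hf.add ((const (-1)).mul hg)

@[fun_prop]
lemma div_const (hf : BddMeasurable f) (c : ℝ) : BddMeasurable fun x => f x / c := by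
  simpa only [div_eq_mul_inv] using hf.mul (const c⁻¹)

@[fun_prop]
lemma pow (hf : BddMeasurable f) (k : ℕ) : BddMeasurable fun x => f x ^ k := by
  obtain ⟨C, hC⟩ := hf.bounded
  refine ⟨hf.measurable.pow_const k, C ^ k, fun x => ?_⟩
  rw [abs_pow]
  exact pow_le_pow_left₀ (abs_nonneg _) (hC x) k

@[fun_prop]
lemma exp (hf : BddMeasurable f) : BddMeasurable fun x => Real.exp (f x) := by
  obtain ⟨C, hC⟩ := hf.bounded
  refine ⟨hf.measurable.exp, Real.exp C, fun x => ?_⟩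
  rw [Real.abs_exp]
  exact Real.exp_le_exp.2 ((le_abs_self _).trans (hC x))

@[fun_prop]
lemma comp (hf : BddMeasurable f) {e : γ → β} (he : Measurable e) :
    BddMeasurable fun x => f (e x) :=
  ⟨hf.measurable.comp he, hf.bounded.imp fun _ hC x => hC (e x)⟩

@[fun_prop]
lemma sum {s : Finset ι} {F : ι → β → ℝ} (hF : ∀ i, BddMeasurable (F i)) :
    BddMeasurable fun x => ∑ i ∈ s, F i x := by
  choose C hC using fun i => (hF i).bounded
  exact ⟨Finset.measurable_fun_sum s fun i _ => (hF i).measurable, ∑ i ∈ s, C i,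
    fun x => (Finset.abs_sum_le_sum_abs _ _).trans (Finset.sum_le_sum fun i _ => hC i x)⟩

@[fun_prop]
lemma sup' {s : Finset ι} (hs : s.Nonempty) {F : ι → β → ℝ} (hF : ∀ i, BddMeasurable (F i)) :
    BddMeasurable fun x => s.sup' hs fun i => F i x := by
  choose C hC using fun i => (hF i).bounded
  refine ⟨?_, s.sup' hs C, fun x => ?_⟩
  · simpa only [← Finset.sup'_apply] using Finset.measurable_sup' hs fun i _ => (hF i).measurable
  · obtain ⟨i, hi, hmax⟩ := Finset.exists_mem_eq_sup' hs fun i => F i x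
    rw [hmax]
    exact (hC i x).trans (Finset.le_sup' C hi)

@[fun_prop]
lemma integral_right {F : β → γ → ℝ} (hF : BddMeasurable fun p : β × γ => F p.1 p.2)
    (ν : Measure γ) [IsProbabilityMeasure ν] : BddMeasurable fun b => ∫ c, F b c ∂ν := by
  obtain ⟨C, hC⟩ := hF.bounded
  refine ⟨hF.measurable.stronglyMeasurable.integral_prod_right'.measurable, C, fun b => ?_⟩
  simpa using norm_integral_le_of_norm_le_const (μ := ν) (f := F b) (.of_forall fun c => hC (b, c))

lemma log_of_le_of_le {c C : ℝ} (hf : Measurable f) (hlow : ∀ x, Real.exp c ≤ f x)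
    (hup : ∀ x, f x ≤ Real.exp C) : BddMeasurable fun x => Real.log (f x) := by
  have hpos : ∀ x, 0 < f x := fun x => (Real.exp_pos c).trans_le (hlow x)
  refine ⟨hf.log, max |c| |C|, fun x => abs_le_max_abs_abs ?_ ?_⟩
  · exact (Real.le_log_iff_exp_le (hpos x)).2 (hlow x)
  · exact (Real.log_le_iff_le_exp (hpos x)).2 (hup x)

@[fun_prop]
lemma log_integral_exp {F : β → γ → ℝ} (hF : BddMeasurable fun p : β × γ => F p.1 p.2)
    (ν : Measure γ) [IsProbabilityMeasure ν] :
    BddMeasurable fun b => Real.log (∫ c, Real.exp (F b c) ∂ν) := by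
  obtain ⟨C, hC⟩ := hF.bounded
  have hint : ∀ b, Integrable (fun c => Real.exp (F b c)) ν := fun b =>
    (hF.exp.comp measurable_prodMk_left).integrable ν
  refine log_of_le_of_le (hF.exp.integral_right ν).measurable (c := -C) (C := C)
    (fun b => ?_) (fun b => ?_)
  · simpa using integral_mono (integrable_const _) (hint b)
      fun c => Real.exp_le_exp.2 (abs_le.1 (hC (b, c))).1
  · simpa using integral_mono (hint b) (integrable_const _)
      fun c => Real.exp_le_exp.2 (abs_le.1 (hC (b, c))).2

lemma integral_exp_pos (hf : BddMeasurable f) (μ : Measure β) [IsProbabilityMeasure μ] :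
    0 < ∫ x, Real.exp (f x) ∂μ :=
  MeasureTheory.integral_exp_pos (hf.exp.integrable μ)

end BddMeasurable

end BoundedMeasurable

section ProductMeasure

variable {n : ℕ} {α : Fin (n + 1) → Type*} [∀ i, MeasurableSpace (α i)]

@[fun_prop]
lemma measurable_insertNth (k : Fin (n + 1)) :
    Measurable fun p : α k × (∀ j, α (k.succAbove j)) => k.insertNth p.1 p.2 :=
  (MeasurableEquiv.piFinSuccAbove α k).symm.measurable

lemma measurePreserving_insertNth (μ : ∀ i, Measure (α i)) [∀ i, IsProbabilityMeasure (μ i)]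
    (k : Fin (n + 1)) :
    MeasurePreserving (fun p : α k × (∀ j, α (k.succAbove j)) => k.insertNth p.1 p.2)
      ((μ k).prod (.pi fun j => μ (k.succAbove j))) (.pi μ) :=
  (measurePreserving_piFinSuccAbove μ k).symm

lemma integral_pi_insertNth (μ : ∀ i, Measure (α i)) [∀ i, IsProbabilityMeasure (μ i)]
    (k : Fin (n + 1)) {F : (∀ i, α i) → ℝ} (hF : BddMeasurable F) :
    ∫ ω, F ω ∂.pi μ =
      ∫ a, ∫ ω, F (k.insertNth a ω) ∂(.pi fun j => μ (k.succAbove j)) ∂μ k := by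
  have h := measurePreserving_insertNth μ k
  rw [← h.map_eq, integral_map h.measurable.aemeasurable hF.measurable.aestronglyMeasurable,
    integral_prod _ ((hF.comp h.measurable).integrable _)]

end ProductMeasure

section Resampling

variable {n : ℕ} {α : Fin n → Type*} [∀ i, MeasurableSpace (α i)]

@[fun_prop]
lemma measurable_update_prod (k : Fin n) :
    Measurable fun p : (∀ i, α i) × α k => Function.update p.1 k p.2 :=
  measurable_update'

lemma integral_pi_update (μ : ∀ i, Measure (α i)) [∀ i, IsProbabilityMeasure (μ i)] (k : Fin n)
    {F : (∀ i, α i) → ℝ} (hF : BddMeasurable F) :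
    ∫ ω, F ω ∂.pi μ = ∫ ω, ∫ a, F (Function.update ω k a) ∂μ k ∂.pi μ := by
  cases n with
  | zero => exact k.elim0
  | succ n =>
    have hG : BddMeasurable fun ω => ∫ a, F (Function.update ω k a) ∂μ k :=
      (hF.comp (measurable_update_prod k)).integral_right _
    have hins := hF.comp (measurable_insertNth k)
    rw [integral_pi_insertNth μ k hF, integral_pi_insertNth μ k hG]
    simp only [Fin.update_insertNth, integral_const, probReal_univ, one_smul]
    exact integral_integral_swap (hins.integrable _)

end Resampling

section Entropy

variable {α β : Type*} [MeasurableSpace α] [MeasurableSpace β]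

/-- The entropy `∫ f log f - (∫ f) log (∫ f)` of `f = exp y`. It is written in terms of the exponent
because every density in use is bounded away from `0` and `∞`. -/
noncomputable def expEntropy (μ : Measure β) (y : β → ℝ) : ℝ :=
  ∫ x, y x * Real.exp (y x) ∂μ - (∫ x, Real.exp (y x) ∂μ) * Real.log (∫ x, Real.exp (y x) ∂μ)

@[fun_prop]
lemma BddMeasurable.expEntropy_right {F : α → β → ℝ}
    (hF : BddMeasurable fun p : α × β => F p.1 p.2) (μ : Measure β) [IsProbabilityMeasure μ] :
    BddMeasurable fun a => expEntropy μ (F a) := by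
  unfold expEntropy
  fun_prop

lemma expEntropy_comp_measurePreserving {μ : Measure α} {ν : Measure β} {e : α → β}
    (he : MeasurePreserving e μ ν) {y : β → ℝ} (hy : BddMeasurable y) :
    expEntropy μ (fun x => y (e x)) = expEntropy ν y := by
  have hmap : ∀ {f : β → ℝ}, BddMeasurable f → ∫ x, f (e x) ∂μ = ∫ x, f x ∂ν := fun hf => by
    rw [← he.map_eq,
      integral_map he.measurable.aemeasurable hf.measurable.aestronglyMeasurable]
  unfold expEntropy
  rw [hmap (hy.mul hy.exp), hmap hy.exp]

variable {μ : Measure β} [IsProbabilityMeasure μ] {y φ : β → ℝ}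

lemma expEntropy_add_const (hy : BddMeasurable y) (c : ℝ) :
    expEntropy μ (fun x => y x + c) = Real.exp c * expEntropy μ y := by
  have hpos := hy.integral_exp_pos μ
  have hmul : ∀ x, (y x + c) * (Real.exp (y x) * Real.exp c) =
      Real.exp c * (y x * Real.exp (y x)) + c * Real.exp c * Real.exp (y x) := fun x => by ring
  simp only [expEntropy, Real.exp_add, hmul]
  rw [integral_add (BddMeasurable.integrable (by fun_prop) μ)
      (BddMeasurable.integrable (by fun_prop) μ), integral_const_mul, integral_const_mul,
    integral_mul_const, Real.log_mul hpos.ne' (Real.exp_ne_zero c), Real.log_exp]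
  ring

/-- The case `c = 0` of the variational formula
`Ent f = inf_c ∫ (f (log f - c) - f + exp c)` for `f = exp y`. -/
lemma expEntropy_le_integral (hy : BddMeasurable y) :
    expEntropy μ y ≤ ∫ x, (1 + (y x - 1) * Real.exp (y x)) ∂μ := by
  have hpos := hy.integral_exp_pos μ
  set m := ∫ x, Real.exp (y x) ∂μ with hm
  have hexpand : ∀ x, 1 + (y x - 1) * Real.exp (y x) =
      1 + (y x * Real.exp (y x) - Real.exp (y x)) := fun x => by ring
  have hlog : m - 1 ≤ m * Real.log m := by
    have := Real.one_sub_inv_le_log_of_pos hpos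
    calc m - 1 = m * (1 - m⁻¹) := by field_simp
      _ ≤ m * Real.log m := by gcongr
  simp only [hexpand, expEntropy]
  rw [integral_add (integrable_const _) (BddMeasurable.integrable (by fun_prop) μ),
    integral_sub (BddMeasurable.integrable (by fun_prop) μ) (hy.exp.integrable μ), ← hm]
  simp only [integral_const, probReal_univ, one_smul]
  linarith

lemma integral_exp_mul_le_expEntropy (hy : BddMeasurable y) (hφ : BddMeasurable φ)
    (hφ1 : ∫ x, Real.exp (φ x) ∂μ ≤ 1) :
    ∫ x, Real.exp (y x) * φ x ∂μ ≤ expEntropy μ y := by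
  have hpos := hy.integral_exp_pos μ
  set m := ∫ x, Real.exp (y x) ∂μ with hm
  have hpt : ∀ x, Real.exp (y x) * φ x ≤
      y x * Real.exp (y x) - (Real.log m + 1) * Real.exp (y x) + m * Real.exp (φ x) := fun x => by
    have hexp : m * Real.exp (φ x) =
        Real.exp (y x) * Real.exp (φ x + Real.log m - y x) := by
      rw [← Real.exp_add, ← Real.exp_log hpos, ← Real.exp_add, Real.log_exp]
      ring_nf
    rw [hexp]
    nlinarith [Real.add_one_le_exp (φ x + Real.log m - y x), Real.exp_pos (y x)]
  calc ∫ x, Real.exp (y x) * φ x ∂μ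
      ≤ ∫ x, (y x * Real.exp (y x) - (Real.log m + 1) * Real.exp (y x)
          + m * Real.exp (φ x)) ∂μ :=
        integral_mono (BddMeasurable.integrable (by fun_prop) μ)
          (BddMeasurable.integrable (by fun_prop) μ) hpt
    _ = expEntropy μ y - m * (1 - ∫ x, Real.exp (φ x) ∂μ) := by
        rw [integral_add (BddMeasurable.integrable (by fun_prop) μ)
            (BddMeasurable.integrable (by fun_prop) μ),
          integral_sub (BddMeasurable.integrable (by fun_prop) μ)
            (BddMeasurable.integrable (by fun_prop) μ),
          integral_const_mul, integral_const_mul, expEntropy, ← hm]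
        ring
    _ ≤ expEntropy μ y := sub_le_self _ (mul_nonneg hpos.le (sub_nonneg.2 hφ1))

end Entropy

section Tensorization

variable {α β : Type*} [MeasurableSpace α] [MeasurableSpace β]
  {μ : Measure α} [IsProbabilityMeasure μ] {ν : Measure β} [IsProbabilityMeasure ν] {y : α × β → ℝ}

lemma expEntropy_prod (hy : BddMeasurable y) :
    expEntropy (μ.prod ν) y = ∫ a, expEntropy ν (fun b => y (a, b)) ∂μ +
      expEntropy μ fun a => Real.log (∫ b, Real.exp (y (a, b)) ∂ν) := by
  have hexp : ∀ a, Real.exp (Real.log (∫ b, Real.exp (y (a, b)) ∂ν)) =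
      ∫ b, Real.exp (y (a, b)) ∂ν := fun a =>
    Real.exp_log ((hy.comp measurable_prodMk_left).integral_exp_pos ν)
  simp only [expEntropy, hexp]
  rw [integral_prod _ ((hy.mul hy.exp).integrable _), integral_prod _ (hy.exp.integrable _),
    integral_sub (BddMeasurable.integrable (by fun_prop) μ)
      (BddMeasurable.integrable (by fun_prop) μ)]
  simp only [mul_comm (Real.log _)]
  ring

/-- Convexity of entropy: `φ = log (G / ∫ G)`, where `G a = ∫ exp (y (a, b)) dν`, is admissible in
the duality formula of every section `y (·, b)` and optimal for the average `G`. -/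
lemma expEntropy_log_integral_le (hy : BddMeasurable y) :
    expEntropy μ (fun a => Real.log (∫ b, Real.exp (y (a, b)) ∂ν)) ≤
      ∫ b, expEntropy μ (fun a => y (a, b)) ∂ν := by
  set L : α → ℝ := fun a => Real.log (∫ b, Real.exp (y (a, b)) ∂ν)
  have bL : BddMeasurable L := by fun_prop
  set m := ∫ a, Real.exp (L a) ∂μ with hm
  have mpos : 0 < m := bL.integral_exp_pos μ
  have hexpL : ∀ a, Real.exp (L a) = ∫ b, Real.exp (y (a, b)) ∂ν := fun a =>
    Real.exp_log ((hy.comp measurable_prodMk_left).integral_exp_pos ν)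
  have hadm : ∫ a, Real.exp (L a - Real.log m) ∂μ ≤ 1 := by
    simp only [Real.exp_sub, Real.exp_log mpos, integral_div, ← hm]
    exact (div_self mpos.ne').le
  calc expEntropy μ L = ∫ a, Real.exp (L a) * (L a - Real.log m) ∂μ := by
        simp only [mul_sub, expEntropy, mul_comm (L _)]
        rw [integral_sub (BddMeasurable.integrable (by fun_prop) μ)
          (BddMeasurable.integrable (by fun_prop) μ), integral_mul_const]
    _ = ∫ a, ∫ b, Real.exp (y (a, b)) * (L a - Real.log m) ∂ν ∂μ := by
        simp only [hexpL, integral_mul_const]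
    _ = ∫ b, ∫ a, Real.exp (y (a, b)) * (L a - Real.log m) ∂μ ∂ν :=
        integral_integral_swap (BddMeasurable.integrable (by fun_prop) _)
    _ ≤ ∫ b, expEntropy μ (fun a => y (a, b)) ∂ν :=
        integral_mono (BddMeasurable.integrable (by fun_prop) ν)
          (BddMeasurable.integrable (by fun_prop) ν) fun b =>
          integral_exp_mul_le_expEntropy (by fun_prop) (by fun_prop) hadm

lemma expEntropy_prod_le (hy : BddMeasurable y) :
    expEntropy (μ.prod ν) y ≤ ∫ b, expEntropy μ (fun a => y (a, b)) ∂ν +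
      ∫ a, expEntropy ν (fun b => y (a, b)) ∂μ := by
  rw [expEntropy_prod hy, add_comm]
  gcongr
  exact expEntropy_log_integral_le hy

lemma expEntropy_pi_le {n : ℕ} {α : Fin n → Type*} [∀ i, MeasurableSpace (α i)]
    (μ : ∀ i, Measure (α i)) [∀ i, IsProbabilityMeasure (μ i)] {y : (∀ i, α i) → ℝ}
    (hy : BddMeasurable y) :
    expEntropy (.pi μ) y ≤
      ∑ k, ∫ ω, expEntropy (μ k) (fun a => y (Function.update ω k a)) ∂.pi μ := by
  induction n with
  | zero =>
    rw [Measure.pi_of_empty μ]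
    simp [expEntropy, integral_dirac' _ _ hy.exp.measurable.stronglyMeasurable,
      integral_dirac' _ _ (hy.mul hy.exp).measurable.stronglyMeasurable, mul_comm]
  | succ n ih =>
    have hresample : ∀ k, BddMeasurable fun ω =>
        expEntropy (μ k) fun a => y (Function.update ω k a) := fun k =>
      (hy.comp (measurable_update_prod k)).expEntropy_right (μ k)
    have hins := hy.comp (measurable_insertNth (α := α) 0)
    rw [← expEntropy_comp_measurePreserving (measurePreserving_insertNth μ 0) hy,
      Fin.sum_univ_succAbove _ 0]
    refine (expEntropy_prod_le hins).trans (add_le_add (le_of_eq ?_) ?_)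
    · simp only [integral_pi_insertNth μ 0 (hresample 0), Fin.update_insertNth, integral_const,
        probReal_univ, one_smul]
    · simp only [integral_pi_insertNth μ 0 (hresample (Fin.succAbove 0 _)), ← Fin.insertNth_update]
      rw [← integral_finsetSum _ fun k _ => BddMeasurable.integrable (by fun_prop) _]
      exact integral_mono (BddMeasurable.integrable (by fun_prop) _)
        (BddMeasurable.integrable (by fun_prop) _) fun a =>
        ih (fun k => μ (Fin.succAbove 0 k)) (hins.comp measurable_prodMk_left)

end Tensorization

section ExponentialInequality

lemma one_add_sub_one_mul_exp_le_of_nonpos {y : ℝ} (hy : y ≤ 0) :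
    1 + (y - 1) * Real.exp y ≤ y ^ 2 / 2 := by
  set h : ℝ → ℝ := fun t => 1 + (t - 1) * Real.exp t - t ^ 2 / 2 with hh
  have hderiv : ∀ t, HasDerivAt h (t * (Real.exp t - 1)) t := fun t => by
    convert! (((((hasDerivAt_id t).sub_const 1).mul (Real.hasDerivAt_exp t)).const_add 1).sub
      (((hasDerivAt_id t).pow 2).div_const 2)) using 1
    simp only [id, Nat.cast_ofNat]
    ring
  have hmono : MonotoneOn h (Set.Iic 0) := by
    refine monotoneOn_of_hasDerivWithinAt_nonneg (convex_Iic 0) (by fun_prop)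
      (fun t _ => (hderiv t).hasDerivWithinAt) fun t ht => ?_
    have ht0 : t ≤ 0 := Set.mem_Iic.1 (interior_subset ht)
    exact mul_nonneg_of_nonpos_of_nonpos ht0 (sub_nonpos.2 (Real.exp_le_one_iff.2 ht0))
  have h0 : h y ≤ h 0 := hmono hy Set.self_mem_Iic hy
  simp only [hh, zero_sub, Real.exp_zero] at h0
  linarith

lemma one_add_sub_one_mul_exp_le_of_nonneg {y : ℝ} (hy : 0 ≤ y) :
    1 + (y - 1) * Real.exp y ≤ y ^ 2 * (Real.exp y - 1) + y ^ 2 / 2 := by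
  have hquad : 0 < y ^ 2 - y + 1 := by nlinarith [sq_nonneg (y - 1)]
  have := mul_le_mul_of_nonneg_left (Real.quadratic_le_exp_of_nonneg hy) hquad.le
  nlinarith [pow_nonneg hy 3, pow_nonneg hy 4]

/-- The lower bound `v` may replace `y` in `y ^ 2 / 2 - c * y`, which is antitone on `y ≤ c`. -/
lemma one_add_sub_one_mul_exp_le {v y c : ℝ} (hc : 0 ≤ c) (hvy : v ≤ y) (hyc : y ≤ c) :
    1 + (y - 1) * Real.exp y ≤ c * (y * Real.exp y - v) + v ^ 2 / 2 := by
  have hy : 1 + (y - 1) * Real.exp y ≤ c * (y * (Real.exp y - 1)) + y ^ 2 / 2 := by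
    rcases le_total y 0 with hneg | hpos
    · have hprod : 0 ≤ y * (Real.exp y - 1) :=
        mul_nonneg_of_nonpos_of_nonpos hneg (sub_nonpos.2 (Real.exp_le_one_iff.2 hneg))
      have := one_add_sub_one_mul_exp_le_of_nonpos hneg
      linarith [mul_nonneg hc hprod]
    · have hprod : 0 ≤ y * (Real.exp y - 1) :=
        mul_nonneg hpos (sub_nonneg.2 (Real.one_le_exp hpos))
      have := one_add_sub_one_mul_exp_le_of_nonneg hpos
      linarith [mul_le_mul_of_nonneg_right hyc hprod]
  have hantitone : y ^ 2 / 2 - c * y ≤ v ^ 2 / 2 - c * v := by nlinarith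
  linarith

end ExponentialInequality

section LogSobolev

variable {α : Type*} [MeasurableSpace α] {μ : Measure α} [IsProbabilityMeasure μ]
  {u z : α → ℝ} {b v l : ℝ}

lemma nonneg_of_integral_eq_zero_of_le (hu : BddMeasurable u) (hu0 : ∫ a, u a ∂μ = 0)
    (hub : ∀ a, u a ≤ b) : 0 ≤ b := by
  have h : ∫ a, u a ∂μ ≤ ∫ _, b ∂μ := integral_mono (hu.integrable μ) (integrable_const b) hub
  simpa [hu0] using h

lemma one_le_integral_exp_mul (hu : BddMeasurable u) (hz : BddMeasurable z)
    (hu0 : ∫ a, u a ∂μ = 0) (huz : ∀ a, u a ≤ z a) (hl : 0 ≤ l) :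
    1 ≤ ∫ a, Real.exp (l * z a) ∂μ := by
  have hlin : ∫ a, (l * u a + 1) ∂μ = 1 := by
    rw [integral_add (BddMeasurable.integrable (by fun_prop) μ) (integrable_const 1),
      integral_const_mul, hu0]
    simp
  rw [← hlin]
  refine integral_mono (BddMeasurable.integrable (by fun_prop) μ)
    (BddMeasurable.integrable (by fun_prop) μ) fun a => ?_
  have := mul_le_mul_of_nonneg_left (huz a) hl
  linarith [Real.add_one_le_exp (l * z a)]

/-- A modified logarithmic Sobolev inequality: `z` need not be centred, but it dominates the centred
function `u`, and the variance of `u` replaces that of `z`. -/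
lemma expEntropy_mul_le (hu : BddMeasurable u) (hz : BddMeasurable z) (hu0 : ∫ a, u a ∂μ = 0)
    (huv : ∫ a, u a ^ 2 ∂μ ≤ v) (huz : ∀ a, u a ≤ z a) (hzb : ∀ a, z a ≤ b) (hl : 0 ≤ l) :
    expEntropy μ (fun a => l * z a) ≤
      l ^ 2 * ∫ a, (b * z a + v / 2) * Real.exp (l * z a) ∂μ := by
  have hb : 0 ≤ b := nonneg_of_integral_eq_zero_of_le hu hu0 fun a => (huz a).trans (hzb a)
  have hv : 0 ≤ v := (integral_nonneg fun a => sq_nonneg (u a)).trans huv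
  have hpt : ∀ a, 1 + (l * z a - 1) * Real.exp (l * z a) ≤
      l ^ 2 * (b * (z a * Real.exp (l * z a)) - b * u a + u a ^ 2 / 2) := fun a => by
    have := one_add_sub_one_mul_exp_le (mul_nonneg hl hb)
      (mul_le_mul_of_nonneg_left (huz a) hl) (mul_le_mul_of_nonneg_left (hzb a) hl)
    linarith
  have hsplit : ∫ a, (b * z a + v / 2) * Real.exp (l * z a) ∂μ =
      b * ∫ a, z a * Real.exp (l * z a) ∂μ + v / 2 * ∫ a, Real.exp (l * z a) ∂μ := by
    simp only [add_mul, mul_assoc]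
    rw [integral_add (BddMeasurable.integrable (by fun_prop) μ)
      (BddMeasurable.integrable (by fun_prop) μ), integral_const_mul, integral_const_mul]
  calc expEntropy μ (fun a => l * z a)
      ≤ ∫ a, (1 + (l * z a - 1) * Real.exp (l * z a)) ∂μ := expEntropy_le_integral (by fun_prop)
    _ ≤ ∫ a, l ^ 2 * (b * (z a * Real.exp (l * z a)) - b * u a + u a ^ 2 / 2) ∂μ :=
        integral_mono (BddMeasurable.integrable (by fun_prop) μ)
          (BddMeasurable.integrable (by fun_prop) μ) hpt
    _ = l ^ 2 * (b * ∫ a, z a * Real.exp (l * z a) ∂μ + (∫ a, u a ^ 2 ∂μ) / 2) := by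
        rw [integral_const_mul, integral_add (BddMeasurable.integrable (by fun_prop) μ)
            (BddMeasurable.integrable (by fun_prop) μ),
          integral_sub (BddMeasurable.integrable (by fun_prop) μ)
            (BddMeasurable.integrable (by fun_prop) μ),
          integral_const_mul, integral_const_mul, integral_div, hu0, mul_zero, sub_zero]
    _ ≤ l ^ 2 * ∫ a, (b * z a + v / 2) * Real.exp (l * z a) ∂μ := by
        rw [hsplit]
        gcongr
        exact (div_le_div_of_nonneg_right huv zero_le_two).trans
          (le_mul_of_one_le_right (by positivity) (one_le_integral_exp_mul hu hz hu0 huz hl))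

lemma expEntropy_mul_le_of_le_sub {w : ℝ} (hu : BddMeasurable u) (hz : BddMeasurable z)
    (hu0 : ∫ a, u a ∂μ = 0) (huv : ∫ a, u a ^ 2 ∂μ ≤ v) (huz : ∀ a, u a ≤ z a - w)
    (hzb : ∀ a, z a - w ≤ b) (hl : 0 ≤ l) :
    expEntropy μ (fun a => l * z a) ≤
      l ^ 2 * ∫ a, (b * (z a - w) + v / 2) * Real.exp (l * z a) ∂μ := by
  have hshift : ∀ a, l * z a = l * (z a - w) + l * w := fun a => by ring
  have h := expEntropy_mul_le (b := b) (v := v) hu (by fun_prop) hu0 huv huz hzb hl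
  calc expEntropy μ (fun a => l * z a)
      = Real.exp (l * w) * expEntropy μ (fun a => l * (z a - w)) := by
        rw [← expEntropy_add_const (by fun_prop) (l * w)]
        simp only [← hshift]
    _ ≤ Real.exp (l * w) *
          (l ^ 2 * ∫ a, (b * (z a - w) + v / 2) * Real.exp (l * (z a - w)) ∂μ) := by gcongr
    _ = l ^ 2 * ∫ a, (b * (z a - w) + v / 2) * Real.exp (l * z a) ∂μ := by
        simp only [hshift, Real.exp_add, ← mul_assoc, integral_mul_const]
        ring_nf

end LogSobolev

section SupSum

variable {α ι κ : Type*} {s : Finset ι} (hs : s.Nonempty) (g : ι → α → ℝ) (t : Finset κ)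

/-- The empirical process `max_{i ∈ s} ∑_{j ∈ t} g i (ω j)` over a finite class. The index set `t`
is a parameter in order to delete single observations. -/
noncomputable def supSum (ω : κ → α) : ℝ :=
  s.sup' hs fun i => ∑ j ∈ t, g i (ω j)

variable {g t}

@[fun_prop]
lemma BddMeasurable.supSum [MeasurableSpace α] (hg : ∀ i, BddMeasurable (g i)) :
    BddMeasurable (supSum hs g t) := by
  unfold _root_.supSum
  fun_prop

lemma sum_le_supSum {i : ι} (hi : i ∈ s) (ω : κ → α) : ∑ j ∈ t, g i (ω j) ≤ supSum hs g t ω :=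
  Finset.le_sup' (fun i => ∑ j ∈ t, g i (ω j)) hi

lemma exists_supSum_eq_sum (ω : κ → α) : ∃ i ∈ s, supSum hs g t ω = ∑ j ∈ t, g i (ω j) :=
  Finset.exists_mem_eq_sup' hs fun i => ∑ j ∈ t, g i (ω j)

variable [DecidableEq κ] {k : κ}

lemma supSum_update_of_notMem (hk : k ∉ t) (ω : κ → α) (a : α) :
    supSum hs g t (Function.update ω k a) = supSum hs g t ω := by
  refine Finset.sup'_congr hs rfl fun i _ => Finset.sum_congr rfl fun j hj => ?_
  rw [Function.update_of_ne (ne_of_mem_of_not_mem hj hk)]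

lemma exists_forall_supSum_sub_erase_le (ω : κ → α) :
    ∃ i ∈ s, supSum hs g t ω = ∑ j ∈ t, g i (ω j) ∧
      ∀ k ∈ t, supSum hs g t ω - supSum hs g (t.erase k) ω ≤ g i (ω k) := by
  obtain ⟨i, hi, hmax⟩ := exists_supSum_eq_sum hs (g := g) (t := t) ω
  refine ⟨i, hi, hmax, fun k hk => ?_⟩
  rw [hmax, ← Finset.add_sum_erase t _ hk]
  linarith [sum_le_supSum hs (g := g) (t := t.erase k) hi ω]

lemma supSum_sub_erase_le {b : ℝ} (hgb : ∀ i a, g i a ≤ b) (hk : k ∈ t) (ω : κ → α) :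
    supSum hs g t ω - supSum hs g (t.erase k) ω ≤ b :=
  let ⟨i, _, _, hle⟩ := exists_forall_supSum_sub_erase_le hs ω
  (hle k hk).trans (hgb i (ω k))

lemma sum_supSum_sub_erase_le (ω : κ → α) :
    ∑ k ∈ t, (supSum hs g t ω - supSum hs g (t.erase k) ω) ≤ supSum hs g t ω := by
  obtain ⟨i, _, hmax, hle⟩ := exists_forall_supSum_sub_erase_le hs (g := g) (t := t) ω
  exact (Finset.sum_le_sum hle).trans hmax.ge

lemma exists_forall_le_supSum_update_sub_erase (hk : k ∈ t) (ω : κ → α) :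
    ∃ i ∈ s, ∀ a, g i a ≤
      supSum hs g t (Function.update ω k a) - supSum hs g (t.erase k) ω := by
  obtain ⟨i, hi, hmax⟩ := exists_supSum_eq_sum hs (g := g) (t := t.erase k) ω
  refine ⟨i, hi, fun a => ?_⟩
  have hsum : ∑ j ∈ t, g i (Function.update ω k a j) =
      g i a + ∑ j ∈ t.erase k, g i (ω j) := by
    rw [← Finset.add_sum_erase t _ hk, Function.update_self]
    congr 1
    exact Finset.sum_congr rfl fun j hj => by
      rw [Function.update_of_ne (Finset.ne_of_mem_erase hj)]
  linarith [sum_le_supSum hs (g := g) (t := t) hi (Function.update ω k a)]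

end SupSum

section Concentration

variable {n : ℕ} {α ι : Type*} [MeasurableSpace α] {μ : Fin n → Measure α}
  [∀ k, IsProbabilityMeasure (μ k)] {s : Finset ι} (hs : s.Nonempty) {g : ι → α → ℝ}
  {b l : ℝ} {v : Fin n → ℝ}

open Finset

lemma integral_expEntropy_update_supSum_le (hg : ∀ i, BddMeasurable (g i))
    (hmean : ∀ i k, ∫ a, g i a ∂μ k = 0) (hvar : ∀ i k, ∫ a, g i a ^ 2 ∂μ k ≤ v k)
    (hgb : ∀ i a, g i a ≤ b) (hl : 0 ≤ l) (k : Fin n) :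
    ∫ ω, expEntropy (μ k) (fun a => l * supSum hs g univ (Function.update ω k a)) ∂.pi μ ≤
      l ^ 2 * ∫ ω, (b * (supSum hs g univ ω - supSum hs g (univ.erase k) ω) + v k / 2) *
        Real.exp (l * supSum hs g univ ω) ∂.pi μ := by
  have herase : ∀ ω a, supSum hs g (univ.erase k) (Function.update ω k a) =
      supSum hs g (univ.erase k) ω := supSum_update_of_notMem hs (notMem_erase k univ)
  conv_rhs => rw [integral_pi_update μ k (by fun_prop), ← integral_const_mul]
  simp only [herase]
  refine integral_mono (BddMeasurable.integrable (by fun_prop) _)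
    (BddMeasurable.integrable (by fun_prop) _) fun ω => ?_
  obtain ⟨i, _, hi⟩ := exists_forall_le_supSum_update_sub_erase hs (g := g) (mem_univ k) ω
  refine expEntropy_mul_le_of_le_sub (hg i) (by fun_prop) (hmean i k) (hvar i k) hi (fun a => ?_) hl
  rw [← herase ω a]
  exact supSum_sub_erase_le hs hgb (mem_univ k) _

lemma expEntropy_supSum_le (hg : ∀ i, BddMeasurable (g i)) (hmean : ∀ i k, ∫ a, g i a ∂μ k = 0)
    (hvar : ∀ i k, ∫ a, g i a ^ 2 ∂μ k ≤ v k) (hb : 0 ≤ b) (hgb : ∀ i a, g i a ≤ b)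
    (hl : 0 ≤ l) :
    expEntropy (.pi μ) (fun ω => l * supSum hs g univ ω) ≤
      l ^ 2 * ∫ ω, (b * supSum hs g univ ω + (∑ k, v k) / 2) *
        Real.exp (l * supSum hs g univ ω) ∂.pi μ := by
  calc expEntropy (.pi μ) (fun ω => l * supSum hs g univ ω)
      ≤ ∑ k, ∫ ω, expEntropy (μ k) (fun a => l * supSum hs g univ (Function.update ω k a)) ∂.pi μ :=
        expEntropy_pi_le μ (by fun_prop)
    _ ≤ ∑ k, l ^ 2 * ∫ ω, (b * (supSum hs g univ ω - supSum hs g (univ.erase k) ω) + v k / 2) *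
          Real.exp (l * supSum hs g univ ω) ∂.pi μ :=
        sum_le_sum fun k _ => integral_expEntropy_update_supSum_le hs hg hmean hvar hgb hl k
    _ = l ^ 2 * ∫ ω, ∑ k, (b * (supSum hs g univ ω - supSum hs g (univ.erase k) ω) + v k / 2) *
          Real.exp (l * supSum hs g univ ω) ∂.pi μ := by
        rw [← mul_sum, integral_finsetSum _ fun k _ => ?_]
        exact BddMeasurable.integrable (by fun_prop) _
    _ ≤ l ^ 2 * ∫ ω, (b * supSum hs g univ ω + (∑ k, v k) / 2) *
          Real.exp (l * supSum hs g univ ω) ∂.pi μ := by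
        refine mul_le_mul_of_nonneg_left (integral_mono (BddMeasurable.integrable (by fun_prop) _)
          (BddMeasurable.integrable (by fun_prop) _) fun ω => ?_) (sq_nonneg l)
        simp only [← sum_mul, sum_add_distrib, ← mul_sum, ← sum_div]
        gcongr
        exact sum_supSum_sub_erase_le hs ω

end Concentration

section Herbst

open Filter Topology

lemma hasDerivAt_div_sub_sub {G : ℝ → ℝ} {G' t : ℝ} (b V : ℝ) (hG : HasDerivAt G G' t)
    (ht : t ≠ 0) :
    HasDerivAt (fun t => G t / t - b * G t - V * t) ((G' * t - G t) / t ^ 2 - b * G' - V) t := by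
  convert! ((hG.div (hasDerivAt_id t) ht).sub (hG.const_mul b)).sub
    ((hasDerivAt_id t).const_mul V) using 1
  simp only [id, mul_one]

lemma tendsto_div_sub_sub {G : ℝ → ℝ} {G' : ℝ} (b V : ℝ) (hG : HasDerivAt G G' 0)
    (hG0 : G 0 = 0) :
    Tendsto (fun t => G t / t - b * G t - V * t) (𝓝[>] 0) (𝓝 G') := by
  have hslope : Tendsto (fun t => G t / t) (𝓝[>] 0) (𝓝 G') := by
    refine ((hasDerivAt_iff_tendsto_slope.1 hG).mono_left
      (nhdsWithin_mono 0 fun t (ht : 0 < t) => ht.ne')).congr fun t => ?_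
    simp [slope_def_field, hG0]
  have hrest : Tendsto (fun t => b * G t + V * t) (𝓝[>] 0) (𝓝 (b * G 0 + V * 0)) :=
    ((hG.continuousAt.const_mul b).add (continuousAt_id.const_mul V)).tendsto.mono_left
      nhdsWithin_le_nhds
  simpa [hG0, sub_sub] using hslope.sub hrest

/-- The hypothesis says that `G t / t - b * G t - V * t`, which tends to `deriv G 0` at `0`, is
nonincreasing. -/
lemma le_of_mul_deriv_sub_le {G : ℝ → ℝ} (hG : Differentiable ℝ G) (hG0 : G 0 = 0) {b V : ℝ}
    (hode : ∀ t, 0 < t → t * deriv G t - G t ≤ t ^ 2 * (b * deriv G t + V)) {l : ℝ}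
    (hl : 0 < l) :
    (1 - l * b) * G l ≤ l * deriv G 0 + V * l ^ 2 := by
  set ψ : ℝ → ℝ := fun t => G t / t - b * G t - V * t with hψ
  have hderiv : ∀ t, 0 < t → HasDerivAt ψ ((deriv G t * t - G t) / t ^ 2 - b * deriv G t - V) t :=
    fun t ht => hasDerivAt_div_sub_sub b V (hG t).hasDerivAt ht.ne'
  have hanti : AntitoneOn ψ (Set.Ioi 0) := by
    refine antitoneOn_of_hasDerivWithinAt_nonpos (convex_Ioi 0)
      (fun t ht => (hderiv t ht).continuousAt.continuousWithinAt)
      (fun t ht => (hderiv t (interior_subset ht)).hasDerivWithinAt) fun t ht => ?_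
    have ht : 0 < t := Set.mem_Ioi.1 (interior_subset ht)
    rw [sub_sub, sub_nonpos, div_le_iff₀ (by positivity)]
    linarith [hode t ht]
  have hle : ψ l ≤ deriv G 0 := by
    refine ge_of_tendsto (tendsto_div_sub_sub b V (hG 0).hasDerivAt hG0) ?_
    filter_upwards [Ioo_mem_nhdsGT hl] with t ht using hanti ht.1 hl ht.2.le
  have hmul : (1 - l * b) * G l = l * ψ l + V * l ^ 2 := by
    simp only [hψ]
    field_simp
    ring
  rw [hmul]
  gcongr

end Herbst

section CgfBound

open ProbabilityTheory

variable {Ω : Type*} [MeasurableSpace Ω] {Q : Measure Ω} [IsProbabilityMeasure Q] {Z : Ω → ℝ}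

namespace BddMeasurable

lemma mem_interior_integrableExpSet (hZ : BddMeasurable Z) (t : ℝ) :
    t ∈ interior (integrableExpSet Z Q) := by
  have huniv : integrableExpSet Z Q = Set.univ :=
    Set.eq_univ_of_forall fun t => BddMeasurable.integrable (by fun_prop) Q
  simp [huniv]

lemma differentiable_cgf (hZ : BddMeasurable Z) : Differentiable ℝ (cgf Z Q) := fun t =>
  (analyticAt_cgf (hZ.mem_interior_integrableExpSet t)).differentiableAt

lemma expEntropy_mul_eq (hZ : BddMeasurable Z) (t : ℝ) :
    expEntropy Q (fun ω => t * Z ω) = (t * deriv (cgf Z Q) t - cgf Z Q t) * mgf Z Q t := by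
  have hpos : 0 < mgf Z Q t := BddMeasurable.integral_exp_pos (by fun_prop) Q
  rw [deriv_cgf (hZ.mem_interior_integrableExpSet t), sub_mul, mul_assoc,
    div_mul_cancel₀ _ hpos.ne', mul_comm (cgf Z Q t)]
  simp only [expEntropy, mul_assoc, integral_const_mul, cgf, mgf]

/-- Herbst's argument. -/
lemma cgf_le_of_expEntropy_le (hZ : BddMeasurable Z) {b V : ℝ}
    (hent : ∀ t, 0 < t → expEntropy Q (fun ω => t * Z ω) ≤
      t ^ 2 * ∫ ω, (b * Z ω + V) * Real.exp (t * Z ω) ∂Q) {l : ℝ} (hl : 0 < l) :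
    (1 - l * b) * cgf Z Q l ≤ l * ∫ ω, Z ω ∂Q + V * l ^ 2 := by
  have hderiv0 : deriv (cgf Z Q) 0 = ∫ ω, Z ω ∂Q := by
    simp [deriv_cgf_zero (hZ.mem_interior_integrableExpSet 0)]
  rw [← hderiv0]
  refine le_of_mul_deriv_sub_le hZ.differentiable_cgf cgf_zero (fun t ht => ?_) hl
  have hpos : 0 < mgf Z Q t := BddMeasurable.integral_exp_pos (by fun_prop) Q
  have hint : ∫ ω, (b * Z ω + V) * Real.exp (t * Z ω) ∂Q =
      (b * deriv (cgf Z Q) t + V) * mgf Z Q t := by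
    rw [deriv_cgf (hZ.mem_interior_integrableExpSet t), add_mul, mul_assoc b,
      div_mul_cancel₀ _ hpos.ne', mgf, ← integral_const_mul, ← integral_const_mul, ← integral_add
        (BddMeasurable.integrable (by fun_prop) Q) (BddMeasurable.integrable (by fun_prop) Q)]
    simp only [add_mul, mul_assoc]
  refine le_of_mul_le_mul_right ?_ hpos
  rw [← hZ.expEntropy_mul_eq t, mul_assoc, ← hint]
  exact hent t ht

lemma measureReal_ge_le_exp_neg (hZ : BddMeasurable Z) {t x l : ℝ} (hl : 0 ≤ l)
    (hcgf : cgf Z Q l + x ≤ l * t) : Q.real {ω | t ≤ Z ω} ≤ Real.exp (-x) :=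
  (measure_ge_le_exp_cgf t hl (BddMeasurable.integrable (by fun_prop) Q)).trans
    (Real.exp_le_exp.2 (by linarith))

end BddMeasurable

/-- A Bernstein-type deviation inequality for the supremum of an empirical process, in the form
obtained before optimizing over `l`. -/
lemma measureReal_le_supSum_le {n : ℕ} {α ι : Type*} [MeasurableSpace α] {μ : Fin n → Measure α}
    [∀ k, IsProbabilityMeasure (μ k)] {s : Finset ι} (hs : s.Nonempty) {g : ι → α → ℝ}
    (hg : ∀ i, BddMeasurable (g i)) (hmean : ∀ i k, ∫ a, g i a ∂μ k = 0) {v : Fin n → ℝ}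
    (hvar : ∀ i k, ∫ a, g i a ^ 2 ∂μ k ≤ v k) {b : ℝ} (hb : 0 ≤ b) (hgb : ∀ i a, g i a ≤ b)
    {l t x : ℝ} (hl : 0 < l) (hlb : l * b < 1)
    (ht : x * (1 - l * b) + l * ∫ ω, supSum hs g .univ ω ∂.pi μ + (∑ k, v k) / 2 * l ^ 2 ≤
      l * t * (1 - l * b)) :
    (Measure.pi μ).real {ω | t ≤ supSum hs g .univ ω} ≤ Real.exp (-x) := by
  have hZ : BddMeasurable (supSum hs g (.univ : Finset (Fin n))) := .supSum hs hg
  have hcgf := hZ.cgf_le_of_expEntropy_le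
    (fun _ ht => expEntropy_supSum_le hs hg hmean hvar hb hgb ht.le) hl
  refine hZ.measureReal_ge_le_exp_neg hl.le (le_of_mul_le_mul_left ?_ (sub_pos.2 hlb))
  linarith

end CgfBound

section Peeling

variable {ι : Type*} {w d : ι → ℝ} {M r ρ : ℝ}

/-- The localized supremum `sup_{w i ≤ ρ} |d i|`. For bounded `d` this is a genuine supremum, and it
is `0` if no index satisfies `w i ≤ ρ`. -/
noncomputable def localSup (w : ι → ℝ) (ρ : ℝ) (d : ι → ℝ) : ℝ :=
  ⨆ i : {i // w i ≤ ρ}, |d i|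

lemma localSup_nonneg : 0 ≤ localSup w ρ d :=
  Real.iSup_nonneg fun _ => abs_nonneg _

lemma abs_le_localSup (hd : ∀ i, |d i| ≤ M) {i : ι} (hi : w i ≤ ρ) : |d i| ≤ localSup w ρ d :=
  le_ciSup (f := fun i : {i // w i ≤ ρ} => |d i|) ⟨M, Set.forall_mem_range.2 fun i => hd i⟩ ⟨i, hi⟩

lemma BddMeasurable.localSup [Countable ι] {Ω : Type*} [MeasurableSpace Ω] {D : ι → Ω → ℝ}
    (hD : ∀ i, Measurable (D i)) (hM : ∀ i ω, |D i ω| ≤ M) :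
    BddMeasurable fun ω => localSup w ρ fun i => D i ω := by
  refine ⟨Measurable.iSup fun i => (hD i).abs, |M|, fun ω => ?_⟩
  rw [abs_of_nonneg localSup_nonneg]
  exact Real.iSup_le (fun i => (hM i ω).trans (le_abs_self M)) (abs_nonneg M)

/-- The range of `w` is cut into `[0, r]` and the shells `(r * 4 ^ k, r * 4 ^ (k + 1)]`. -/
lemma abs_div_add_le_sum_localSup (hd : ∀ i, |d i| ≤ M) (hr : 0 < r) {i : ι} (hw : 0 ≤ w i) {N : ℕ}
    (hN : w i ≤ r * 4 ^ N) :
    |d i| / (w i + r) ≤ localSup w r d / r +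
      ∑ k ∈ Finset.range N, localSup w (r * 4 ^ (k + 1)) d / (r * 4 ^ k) := by
  have hnonneg : ∀ k, 0 ≤ localSup w (r * 4 ^ (k + 1)) d / (r * 4 ^ k) := fun k =>
    div_nonneg localSup_nonneg (by positivity)
  induction N with
  | zero =>
    simpa using div_le_div₀ localSup_nonneg (abs_le_localSup hd (by simpa using hN)) hr
      (le_add_of_nonneg_left hw)
  | succ N ih =>
    rw [Finset.sum_range_succ, ← add_assoc]
    rcases le_or_gt (w i) (r * 4 ^ N) with hle | hlt
    · exact (ih hle).trans (le_add_of_nonneg_right (hnonneg N))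
    · have hshell : |d i| / (w i + r) ≤ localSup w (r * 4 ^ (N + 1)) d / (r * 4 ^ N) :=
        div_le_div₀ localSup_nonneg (abs_le_localSup hd hN) (by positivity) (by linarith)
      exact hshell.trans (le_add_of_nonneg_left (add_nonneg (div_nonneg localSup_nonneg hr.le)
        (Finset.sum_nonneg fun k _ => hnonneg k)))

lemma exists_forall_mem_le_mul_four_pow (w : ι → ℝ) (hr : 0 < r) {s : Finset ι}
    (hs : s.Nonempty) : ∃ N : ℕ, ∀ i ∈ s, w i ≤ r * 4 ^ N := by
  obtain ⟨N, hN⟩ := pow_unbounded_of_one_lt (s.sup' hs w / r) (by norm_num : (1 : ℝ) < 4)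
  exact ⟨N, fun i hi => (Finset.le_sup' w hi).trans ((div_lt_iff₀' hr).1 hN).le⟩

variable {Φ : ℝ → ℝ}

lemma le_sqrt_div_mul_of_antitoneOn (hΦ : AntitoneOn (fun r => Φ r / √r) (Set.Ioi 0)) {s t : ℝ}
    (hs : 0 < s) (hst : s ≤ t) : Φ t ≤ √(t / s) * Φ s := by
  have ht : 0 < t := hs.trans_le hst
  have h := (div_le_iff₀ (Real.sqrt_pos.2 ht)).1 (hΦ hs ht hst)
  rwa [div_mul_eq_mul_div, mul_comm, mul_div_right_comm, ← Real.sqrt_div' t hs.le] at h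

lemma apply_mul_four_pow_le (hΦ : AntitoneOn (fun r => Φ r / √r) (Set.Ioi 0)) (hr : 0 < r)
    (m : ℕ) : Φ (r * 4 ^ m) ≤ 2 ^ m * Φ r := by
  have h := le_sqrt_div_mul_of_antitoneOn hΦ hr
    (le_mul_of_one_le_right hr.le (one_le_pow₀ (by norm_num : (1 : ℝ) ≤ 4) (n := m)))
  have hfour : (4 : ℝ) ^ m = (2 ^ m) ^ 2 := by rw [← pow_mul, mul_comm, pow_mul]; norm_num
  rwa [mul_div_cancel_left₀ _ hr.ne', hfour, Real.sqrt_sq (by positivity), ← hfour] at h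

lemma apply_mul_four_pow_succ_div_le (hΦ : AntitoneOn (fun r => Φ r / √r) (Set.Ioi 0))
    (hr : 0 < r) (k : ℕ) : Φ (r * 4 ^ (k + 1)) / (r * 4 ^ k) ≤ Φ r / r * (2 * (1 / 2) ^ k) := by
  have hpow : (4 : ℝ) ^ k = 2 ^ k * 2 ^ k := by rw [← mul_pow]; norm_num
  rw [div_le_iff₀ (by positivity)]
  refine (apply_mul_four_pow_le hΦ hr (k + 1)).trans_eq ?_
  rw [hpow, one_div_pow]
  field_simp
  ring

lemma integral_sup'_div_add_le [Countable ι] {Ω : Type*} [MeasurableSpace Ω] {Q : Measure Ω}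
    [IsProbabilityMeasure Q] {D : ι → Ω → ℝ} (hD : ∀ i, Measurable (D i))
    (hM : ∀ i ω, |D i ω| ≤ M) (hw : ∀ i, 0 ≤ w i)
    (hΦ : AntitoneOn (fun r => Φ r / √r) (Set.Ioi 0))
    (hcomp : ∀ ρ, 0 < ρ → ∫ ω, localSup w ρ (fun i => D i ω) ∂Q ≤ Φ ρ)
    (hr : 0 < r) {s : Finset ι} (hs : s.Nonempty) :
    ∫ ω, s.sup' hs (fun i => D i ω / (w i + r)) ∂Q ≤ 5 * (Φ r / r) := by
  obtain ⟨N, hN⟩ := exists_forall_mem_le_mul_four_pow w hr hs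
  have hD' : ∀ i, BddMeasurable (D i) := fun i => ⟨hD i, M, hM i⟩
  have hS : ∀ ρ, BddMeasurable fun ω => localSup w ρ fun i => D i ω := fun ρ => .localSup hD hM
  have hΦr : 0 ≤ Φ r := (integral_nonneg fun _ => localSup_nonneg).trans (hcomp r hr)
  calc ∫ ω, s.sup' hs (fun i => D i ω / (w i + r)) ∂Q
      ≤ ∫ ω, (localSup w r (fun i => D i ω) / r + ∑ k ∈ Finset.range N,
          localSup w (r * 4 ^ (k + 1)) (fun i => D i ω) / (r * 4 ^ k)) ∂Q := by
        refine integral_mono (BddMeasurable.integrable (by fun_prop) Q)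
          (BddMeasurable.integrable (by fun_prop) Q) fun ω => Finset.sup'_le hs _ fun i hi => ?_
        have hwr : 0 ≤ w i + r := add_nonneg (hw i) hr.le
        exact (div_le_div_of_nonneg_right (le_abs_self _) hwr).trans
          (abs_div_add_le_sum_localSup (fun i => hM i ω) hr (hw i) (hN i hi))
    _ = (∫ ω, localSup w r (fun i => D i ω) ∂Q) / r + ∑ k ∈ Finset.range N,
          (∫ ω, localSup w (r * 4 ^ (k + 1)) (fun i => D i ω) ∂Q) / (r * 4 ^ k) := by
        rw [integral_add (BddMeasurable.integrable (by fun_prop) Q)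
          (BddMeasurable.integrable (by fun_prop) Q), integral_finsetSum _ fun k _ =>
            ((hS _).div_const _).integrable Q]
        simp only [integral_div]
    _ ≤ Φ r / r + ∑ k ∈ Finset.range N, Φ r / r * (2 * (1 / 2) ^ k) := by
        gcongr with k
        · exact hcomp r hr
        · exact (div_le_div_of_nonneg_right (hcomp _ (by positivity)) (by positivity)).trans
            (apply_mul_four_pow_succ_div_le hΦ hr k)
    _ ≤ 5 * (Φ r / r) := by
        rw [← Finset.mul_sum, ← Finset.mul_sum]
        have := mul_le_mul_of_nonneg_left (sum_geometric_two_le N) (div_nonneg hΦr hr.le)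
        linarith

end Peeling

section EmpiricalDeviation

variable {α : Type*} [MeasurableSpace α] (P : Measure α) {n : ℕ} {f : α → ℝ} {C : ℝ}

/-- The deviation `(P - P_n) f` of the empirical mean over the sample `ω` from the mean. -/
noncomputable def empDev (f : α → ℝ) (ω : Fin n → α) : ℝ :=
  ∫ a, f a ∂P - (∑ j, f (ω j)) / n

@[fun_prop]
lemma BddMeasurable.empDev (hf : BddMeasurable f) :
    BddMeasurable (empDev P f : (Fin n → α) → ℝ) := by
  unfold _root_.empDev
  fun_prop

lemma sum_integral_sub_div (hn : n ≠ 0) (c : ℝ) (ω : Fin n → α) :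
    ∑ j, (∫ a, f a ∂P - f (ω j)) / (n * c) = empDev P f ω / c := by
  have hn' : (n : ℝ) ≠ 0 := Nat.cast_ne_zero.2 hn
  rw [← Finset.sum_div, Finset.sum_sub_distrib, Finset.sum_const, Finset.card_univ,
    Fintype.card_fin, nsmul_eq_mul, ← div_div, sub_div, mul_div_cancel_left₀ _ hn', empDev]

lemma integral_integral_sub_div_sq (hf : BddMeasurable f) (c : ℝ) :
    ∫ a, ((∫ a, f a ∂P - f a) / c) ^ 2 ∂P = ProbabilityTheory.variance f P / c ^ 2 := by
  rw [ProbabilityTheory.variance_eq_integral hf.measurable.aemeasurable, ← integral_div]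
  simp only [div_pow, sub_sq_comm]

variable [IsProbabilityMeasure P]

lemma abs_integral_le_of_abs_le (hfC : ∀ a, |f a| ≤ C) : |∫ a, f a ∂P| ≤ C := by
  simpa using norm_integral_le_of_norm_le_const (μ := P) (f := f) (.of_forall hfC)

lemma abs_empDev_le (hfC : ∀ a, |f a| ≤ C) (ω : Fin n → α) : |empDev P f ω| ≤ 2 * C := by
  have hmean : |∫ a, f a ∂P| ≤ C := abs_integral_le_of_abs_le P hfC
  have hsum : |∑ j, f (ω j)| ≤ n * C := by
    simpa using (Finset.abs_sum_le_sum_abs (fun j => f (ω j)) Finset.univ).trans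
      (Finset.sum_le_sum fun j _ => hfC (ω j))
  have hemp : |(∑ j, f (ω j)) / n| ≤ C := by
    rw [abs_div, Nat.abs_cast]
    exact div_le_of_le_mul₀ n.cast_nonneg ((abs_nonneg _).trans hmean) (by linarith)
  rw [two_mul]
  exact (abs_sub _ _).trans (add_le_add hmean hemp)

lemma integral_integral_sub_div (hf : BddMeasurable f) (c : ℝ) :
    ∫ a, (∫ a, f a ∂P - f a) / c ∂P = 0 := by
  rw [integral_div, integral_sub (integrable_const _) (hf.integrable P)]
  simp

lemma div_mul_add_sq_le {V w r c : ℝ} (hV : V ≤ w) (hw : 0 ≤ w) (hr : 0 < r) (hc : 0 < c) :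
    V / (c * (w + r)) ^ 2 ≤ 1 / (4 * r * c ^ 2) := by
  rw [div_le_div_iff₀ (by positivity) (by positivity)]
  have hsq : 4 * r * V ≤ (w + r) ^ 2 := by nlinarith [sq_nonneg (w - r)]
  nlinarith [mul_le_mul_of_nonneg_right hsq (sq_nonneg c)]

end EmpiricalDeviation

lemma measure_iUnion_le_of_forall_finset {ι Ω : Type*} [Countable ι]
    [MeasurableSpace Ω] {μ : Measure Ω} {E : ι → Set Ω} {c : ENNReal}
    (hE : ∀ s : Finset ι, μ (⋃ i ∈ s, E i) ≤ c) : μ (⋃ i, E i) ≤ c := by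
  classical
  have hdir : Directed (· ⊆ ·) fun s : Finset ι => ⋃ i ∈ s, E i :=
    Monotone.directed_le fun s t hst => Set.biUnion_subset_biUnion_left hst
  rw [Set.iUnion_eq_iUnion_finset, hdir.measure_iUnion]
  exact iSup_le hE

section Localization

variable {α ι : Type*} [MeasurableSpace α] {P : Measure α} [IsProbabilityMeasure P] {n : ℕ}
  {f : ι → α → ℝ} {C : ℝ} {w : ι → ℝ} {Φ : ℝ → ℝ}

lemma measureReal_le_sup'_empDev_div_le [Countable ι] (hf : ∀ i, Measurable (f i))
    (hfC : ∀ i a, |f i a| ≤ C) (hvar : ∀ i, ProbabilityTheory.variance (f i) P ≤ w i)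
    (hΦ : AntitoneOn (fun r => Φ r / √r) (Set.Ioi 0)) (hn : n ≠ 0)
    (hcomp : ∀ ρ, 0 < ρ →
      ∫ ω : Fin n → α, localSup w ρ (fun i => empDev P (f i) ω) ∂.pi (fun _ => P) ≤ Φ ρ)
    {r : ℝ} (hr : 0 < r) {s : Finset ι} (hs : s.Nonempty) {l t x : ℝ} (hl : 0 < l)
    (hlb : l * (2 * C / (n * r)) < 1)
    (ht : x * (1 - l * (2 * C / (n * r))) + l * (5 * (Φ r / r)) + l ^ 2 / (8 * r * n) ≤
      l * t * (1 - l * (2 * C / (n * r)))) :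
    (Measure.pi fun _ : Fin n => P).real
      {ω | t ≤ s.sup' hs fun i => empDev P (f i) ω / (w i + r)} ≤ Real.exp (-x) := by
  have hn' : (0 : ℝ) < n := by positivity
  have hw : ∀ i, 0 ≤ w i := fun i => (ProbabilityTheory.variance_nonneg _ _).trans (hvar i)
  have hfb : ∀ i, BddMeasurable (f i) := fun i => ⟨hf i, C, hfC i⟩
  have hC : 0 ≤ C := (abs_nonneg _).trans (abs_integral_le_of_abs_le P (hfC hs.choose))
  set g : ι → α → ℝ := fun i a => (∫ a, f i a ∂P - f i a) / (n * (w i + r)) with hg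
  have hsup : ∀ ω : Fin n → α,
      supSum hs g .univ ω = s.sup' hs fun i => empDev P (f i) ω / (w i + r) := fun ω => by
    simp only [supSum, hg, sum_integral_sub_div P hn]
  have hgb : ∀ i a, g i a ≤ 2 * C / (n * r) := fun i a => by
    have hnum : ∫ a, f i a ∂P - f i a ≤ 2 * C := by
      linarith [(abs_le.1 (abs_integral_le_of_abs_le P (hfC i))).2, (abs_le.1 (hfC i a)).1]
    exact div_le_div₀ (by positivity) hnum (by positivity)
      (mul_le_mul_of_nonneg_left (le_add_of_nonneg_left (hw i)) hn'.le)
  have hgvar : ∀ i, ∫ a, g i a ^ 2 ∂P ≤ 1 / (4 * r * n ^ 2) := fun i =>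
    (integral_integral_sub_div_sq P (hfb i) _).trans_le (div_mul_add_sq_le (hvar i) (hw i) hr hn')
  have hmean : ∫ ω : Fin n → α, supSum hs g .univ ω ∂.pi (fun _ => P) ≤ 5 * (Φ r / r) := by
    simp only [hsup]
    exact integral_sup'_div_add_le (fun i => ((hfb i).empDev P).measurable)
      (fun i => abs_empDev_le P (hfC i)) hw hΦ hcomp hr hs
  simp only [← hsup]
  refine measureReal_le_supSum_le hs (fun i => by fun_prop)
    (fun i _ => integral_integral_sub_div P (hfb i) _) (fun i _ => hgvar i) (by positivity) hgb hl
    hlb (le_trans ?_ ht)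
  have hsum : (∑ _ : Fin n, 1 / (4 * r * n ^ 2)) / 2 * l ^ 2 = l ^ 2 / (8 * r * n) := by
    rw [Finset.sum_const, Finset.card_univ, Fintype.card_fin, nsmul_eq_mul]
    field_simp
    norm_num
  rw [hsum]
  gcongr

/-- The fixed-point bound on `Φ ρ` extends to `r ≥ ρ` by
`√(r / ρ) * ρ = √(r * ρ) ≤ r / 4 + ρ`. -/
lemma mul_apply_le_of_apply_le_div (hΦ : AntitoneOn (fun r => Φ r / √r) (Set.Ioi 0)) {K r ρ : ℝ}
    (hK : 0 < K) (hρ : 0 < ρ) (hΦρ : Φ ρ ≤ ρ / (24 * K)) (hr : ρ ≤ r) :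
    24 * (K * Φ r) ≤ r / 4 + ρ := by
  have hsq : √(r / ρ) ^ 2 * ρ = r := by
    rw [Real.sq_sqrt (div_nonneg (hρ.le.trans hr) hρ.le), div_mul_cancel₀ _ hρ.ne']
  calc 24 * (K * Φ r) ≤ 24 * (K * (√(r / ρ) * (ρ / (24 * K)))) := by
        have := (le_sqrt_div_mul_of_antitoneOn hΦ hρ hr).trans
          (mul_le_mul_of_nonneg_left hΦρ (Real.sqrt_nonneg _))
        gcongr
    _ = √(r / ρ) * ρ := by field_simp
    _ ≤ r / 4 + ρ := by nlinarith [mul_nonneg (sq_nonneg (√(r / ρ) / 2 - 1)) hρ.le]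

/-- With `l = 3 * K * x / 2`, the terms of the Chernoff bound are, up to the factor `x / r`, linear
in `K * Φ r`, `K ^ 2 * x / n` and `K * C * x / n`. -/
lemma chernoff_exponent_le {K r ρ N x : ℝ} (hK : 0 < K) (hρ : 0 < ρ) (hN : 0 < N) (hx : 0 < x)
    (hC : 0 ≤ C) (hΦr : 24 * (K * Φ r) ≤ r / 4 + ρ)
    (hr : r = ρ + (9 * K ^ 2 + 16 * K * C) * x / (4 * N)) :
    x * (1 - 3 * K * x / 2 * (2 * C / (N * r))) + 3 * K * x / 2 * (5 * (Φ r / r)) +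
      (3 * K * x / 2) ^ 2 / (8 * r * N) ≤
        3 * K * x / 2 * K⁻¹ * (1 - 3 * K * x / 2 * (2 * C / (N * r))) := by
  obtain ⟨A, hA⟩ : ∃ A, A = K ^ 2 * x / N := ⟨_, rfl⟩
  obtain ⟨B, hB⟩ : ∃ B, B = K * C * x / N := ⟨_, rfl⟩
  have hA0 : 0 ≤ A := hA ▸ by positivity
  have hB0 : 0 ≤ B := hB ▸ by positivity
  have hrAB : r = ρ + 9 / 4 * A + 4 * B := by rw [hr, hA, hB]; field_simp; ring
  have hr0 : 0 < r := by linarith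
  have hβ : 3 * K * x / 2 * (2 * C / (N * r)) = 3 * B / r := by rw [hB]; field_simp
  have hmean : 3 * K * x / 2 * (5 * (Φ r / r)) = x / r * (15 / 2 * (K * Φ r)) := by
    field_simp
    ring
  have hquad : (3 * K * x / 2) ^ 2 / (8 * r * N) = x / r * (9 / 32 * A) := by
    rw [hA]
    field_simp
    ring
  have hone : 1 - 3 * B / r = (r - 3 * B) / r := by field_simp
  have hkey : 15 / 2 * (K * Φ r) + 9 / 32 * A ≤ (r - 3 * B) / 2 := by linarith
  have := mul_le_mul_of_nonneg_left hkey (div_pos hx hr0).le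
  rw [hβ, hmean, hquad, hone]
  have hslope : 3 * K * x / 2 * K⁻¹ = 3 / 2 * x := by field_simp
  rw [hslope]
  have hx' : x / r * ((r - 3 * B) / 2) = 1 / 2 * (x * ((r - 3 * B) / r)) := by ring
  linarith

lemma chernoff_slope_lt_one {K r ρ N x : ℝ} (hK : 0 < K) (hρ : 0 < ρ) (hN : 0 < N) (hx : 0 < x)
    (hC : 0 ≤ C) (hr : r = ρ + (9 * K ^ 2 + 16 * K * C) * x / (4 * N)) :
    3 * K * x / 2 * (2 * C / (N * r)) < 1 := by
  have hlt : 3 * (K * C * x / N) < r := by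
    have hdecomp : r = ρ + 9 / 4 * (K ^ 2 * x / N) + 4 * (K * C * x / N) := by
      rw [hr]; field_simp; ring
    have hA : 0 ≤ K ^ 2 * x / N := by positivity
    have hB : 0 ≤ K * C * x / N := by positivity
    linarith
  have hr0 : 0 < r := lt_of_le_of_lt (by positivity) hlt
  calc 3 * K * x / 2 * (2 * C / (N * r)) = 3 * (K * C * x / N) / r := by field_simp
    _ < 1 := (div_lt_one hr0).2 hlt

lemma measure_biUnion_inv_mul_lt_empDev_le [Countable ι] (hf : ∀ i, Measurable (f i))
    (hfC : ∀ i a, |f i a| ≤ C) (hvar : ∀ i, ProbabilityTheory.variance (f i) P ≤ w i)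
    (hΦ : AntitoneOn (fun r => Φ r / √r) (Set.Ioi 0)) (hn : n ≠ 0)
    (hcomp : ∀ ρ, 0 < ρ →
      ∫ ω : Fin n → α, localSup w ρ (fun i => empDev P (f i) ω) ∂.pi (fun _ => P) ≤ Φ ρ)
    {K ρ x : ℝ} (hK : 0 < K) (hρ : 0 < ρ) (hΦρ : Φ ρ ≤ ρ / (24 * K)) (hx : 0 < x)
    (s : Finset ι) :
    Measure.pi (fun _ : Fin n => P) (⋃ i ∈ s, {ω |
      K⁻¹ * (w i + ρ + (9 * K ^ 2 + 16 * K * C) * x / (4 * n)) < empDev P (f i) ω}) ≤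
        ENNReal.ofReal (Real.exp (-x)) := by
  rcases s.eq_empty_or_nonempty with rfl | hs
  · simp
  have hn' : (0 : ℝ) < n := by positivity
  have hC : 0 ≤ C := (abs_nonneg _).trans (abs_integral_le_of_abs_le P (hfC hs.choose))
  obtain ⟨r, hr⟩ : ∃ r, r = ρ + (9 * K ^ 2 + 16 * K * C) * x / (4 * n) := ⟨_, rfl⟩
  have hρr : ρ ≤ r := hr ▸ le_add_of_nonneg_right (by positivity)
  have hr0 : 0 < r := hρ.trans_le hρr
  have htail := measureReal_le_sup'_empDev_div_le hf hfC hvar hΦ hn hcomp hr0 hs (by positivity)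
    (chernoff_slope_lt_one hK hρ hn' hx hC hr)
    (chernoff_exponent_le hK hρ hn' hx hC (mul_apply_le_of_apply_le_div hΦ hK hρ hΦρ hρr) hr)
  rw [← ofReal_measureReal (measure_ne_top _ _)]
  refine ENNReal.ofReal_le_ofReal ((measureReal_mono ?_).trans htail)
  refine Set.iUnion₂_subset fun i hi ω hω => ?_
  have hwr : 0 < w i + r :=
    add_pos_of_nonneg_of_pos ((ProbabilityTheory.variance_nonneg _ _).trans (hvar i)) hr0
  rw [Set.mem_ofPred_eq, add_assoc, ← hr] at hω
  exact ((le_div_iff₀ hwr).2 hω.le).trans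
    (Finset.le_sup' (fun i => empDev P (f i) ω / (w i + r)) hi)

theorem stmt13_general [Countable ι] (hf : ∀ i, Measurable (f i))
    (hfC : ∀ i a, |f i a| ≤ C) (hvar : ∀ i, ProbabilityTheory.variance (f i) P ≤ w i)
    (hΦ : AntitoneOn (fun r => Φ r / √r) (Set.Ioi 0)) (hn : n ≠ 0)
    (hcomp : ∀ ρ, 0 < ρ →
      ∫ ω : Fin n → α, localSup w ρ (fun i => empDev P (f i) ω) ∂.pi (fun _ => P) ≤ Φ ρ)
    {K ρ x : ℝ} (hK : 0 < K) (hρ : 0 < ρ) (hΦρ : Φ ρ ≤ ρ / (24 * K)) (hx : 0 < x) :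
    ENNReal.ofReal (1 - Real.exp (-x)) ≤ Measure.pi (fun _ : Fin n => P) {ω | ∀ i,
      empDev P (f i) ω ≤ K⁻¹ * (w i + ρ + (9 * K ^ 2 + 16 * K * C) * x / (4 * n))} := by
  have hbad := measure_iUnion_le_of_forall_finset
    (measure_biUnion_inv_mul_lt_empDev_le hf hfC hvar hΦ hn hcomp hK hρ hΦρ hx)
  have hmeas : MeasurableSet (⋃ i, {ω : Fin n → α |
      K⁻¹ * (w i + ρ + (9 * K ^ 2 + 16 * K * C) * x / (4 * n)) < empDev P (f i) ω}) :=
    .iUnion fun i => measurableSet_lt measurable_const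
      (BddMeasurable.empDev P ⟨hf i, C, hfC i⟩).measurable
  rw [ENNReal.ofReal_sub _ (Real.exp_nonneg _), ENNReal.ofReal_one]
  convert! tsub_le_tsub_left hbad 1 |>.trans_eq (prob_compl_eq_one_sub hmeas).symm using 2
  ext ω
  simp

end Localization

/-- Theorem 4.5 (localization theorem, after Blanchard–Bousquet–Massart): under a
variance control `Var f ≤ ω(f)` and a sub-root bound `Φ` on the localized
complexity, with `r*` the unique positive solution of `Φ(r) = r/(24K)`, for every
`x > 0`, with probability at least `1 − e^{−x}`, every `f` in the class satisfies
`Pf − P_n f ≤ K⁻¹ (ω(f) + r* + (9K² + 16K‖F‖_∞) x/(4n))`. -/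
theorem stmt13 {α : Type*} [MeasurableSpace α] {ι : Type*} [Countable ι]
    (P : Measure α) [IsProbabilityMeasure P]
    (f : ι → α → ℝ) (hmeas : ∀ i, Measurable (f i))
    -- the class is uniformly bounded by `Cb`
    (Cb : ℝ) (hbdd : ∀ i x, |f i x| ≤ Cb)
    -- the variance control `ω`
    (w : ι → ℝ) (hw0 : ∀ i, 0 ≤ w i)
    (hvar : ∀ i, ProbabilityTheory.variance (f i) P ≤ w i)
    -- `Φ` is sub-root
    (Φ : ℝ → ℝ) (hΦpos : ∀ r, 0 < r → 0 < Φ r)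
    (hΦmono : ∀ s t, 0 < s → s ≤ t → Φ s ≤ Φ t)
    (hΦsub : ∀ s t, 0 < s → s ≤ t → Φ t / Real.sqrt t ≤ Φ s / Real.sqrt s)
    (n : ℕ) (hn : 0 < n)
    -- `Φ` bounds the localized complexity
    (hcomp : ∀ r : ℝ, 0 < r →
      (∫ ω : Fin n → α, (⨆ i : {i : ι // w i ≤ r},
          |(∫ x, f i x ∂P) - (∑ j, f i (ω j)) / n|)
        ∂(Measure.pi fun _ : Fin n => P)) ≤ Φ r)
    (K : ℝ) (hK : 0 < K)
    -- `r*` is the unique positive solution of `Φ(r) = r/(24K)`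
    (rstar : ℝ) (hrpos : 0 < rstar) (hrsol : Φ rstar = rstar / (24 * K))
    (huniq : ∀ r, 0 < r → Φ r = r / (24 * K) → r = rstar)
    (x : ℝ) (hx : 0 < x) :
    ENNReal.ofReal (1 - Real.exp (-x)) ≤
      Measure.pi (fun _ : Fin n => P)
        {ω : Fin n → α | ∀ i : ι,
          (∫ y, f i y ∂P) - (∑ j, f i (ω j)) / n ≤
            K⁻¹ * (w i + rstar + (9 * K ^ 2 + 16 * K * Cb) * x / (4 * n))} :=
  stmt13_general hmeas hbdd hvar (fun s hs t _ hst => hΦsub s t hs hst) hn.ne'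
    hcomp hK hrpos hrsol.le hx
end

section
/- Assume P satisfies a margin condition with radius r_0 (so M is finite). Let F = { γ(c,·) − γ(c*(c),·) : c ∈ B(0,M)^k }, where c*(c) ∈ argmin_{c* ∈ M} ‖c − c*‖, and set ω(f) = 16M² ‖c − c*(c)‖² for f = γ(c,·) − γ(c*(c),·). Then for every δ > 0, E sup_{f ∈ F, ω(f) ≤ δ} |(P − P_n) f| ≤ (4√(πk) + √(2 log|M̄|)) √δ / √n, where P_n is the empirical measure of n i.i.d. observations from P. -/
open MeasureTheory Metric

noncomputable section

variable {H : Type*} [NormedAddCommGroup H] [InnerProductSpace ℝ H] [MeasurableSpace H]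

/-- `qgamma k c x = min_j ‖x - c j‖²`. -/
def qgamma (k : ℕ) (c : Fin k → H) (x : H) : ℝ := ⨅ j : Fin k, ‖x - c j‖ ^ 2

/-- distortion (risk) of a codebook. -/
def qrisk (k : ℕ) (P : Measure H) (c : Fin k → H) : ℝ := ∫ x, qgamma k c x ∂P

/-- the set of optimal codebooks. -/
def qopt (k : ℕ) (P : Measure H) : Set (Fin k → H) :=
  {c | ∀ c' : Fin k → H, qrisk k P c ≤ qrisk k P c'}

/-- the `i`-th (closed) Voronoi cell of the codebook `c`. -/
def vcell (k : ℕ) (c : Fin k → H) (i : Fin k) : Set H :=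
  {x | ∀ j : Fin k, ‖x - c i‖ ≤ ‖x - c j‖}

/-- `B`, the minimal separation between code points of optimal codebooks. -/
def qB (k : ℕ) (P : Measure H) : ℝ :=
  sInf {b | ∃ c ∈ qopt k P, ∃ i j : Fin k, i ≠ j ∧ b = ‖c i - c j‖}

/-- `p_min`, the minimal mass of a Voronoi cell of an optimal codebook. -/
def qpmin (k : ℕ) (P : Measure H) : ℝ :=
  sInf {p | ∃ c ∈ qopt k P, ∃ i : Fin k, p = (P (vcell k c i)).toReal}

/-- `N_{c*}`, the union of the boundaries between Voronoi cells. -/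
def nbd (k : ℕ) (c : Fin k → H) : Set H :=
  ⋃ (i : Fin k) (j : Fin k) (_ : i ≠ j), vcell k c i ∩ vcell k c j

/-- the weight function `p(t)`, the maximal mass of the closed `t`-neighborhood
of `N_{c*}` over optimal codebooks `c*`. -/
def pweight (k : ℕ) (P : Measure H) (t : ℝ) : ℝ :=
  sSup {p | ∃ c ∈ qopt k P, p = (P (cthickening t (nbd k c))).toReal}

/-- `P` is `M`-bounded: its support is contained in the closed ball `B(0,M)`. -/
def mbounded (P : Measure H) (M : ℝ) : Prop := P (closedBall (0 : H) M)ᶜ = 0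

/-- the support of `P` contains more than `k` points. -/
def suppGT (P : Measure H) (k : ℕ) : Prop :=
  ∀ S : Finset H, S.card ≤ k → P ((S : Set H)ᶜ) ≠ 0

/-- the margin condition with radius `r0`. -/
def margin (k : ℕ) (P : Measure H) (M r0 : ℝ) : Prop :=
  0 < r0 ∧ mbounded P M ∧
    ∀ t : ℝ, 0 ≤ t → t ≤ r0 → pweight k P t ≤ qB k P * qpmin k P * t / (128 * M ^ 2)

/-!
An optimal codebook has distinct code points in the ball of radius `M`: otherwise one of them could
be moved to a point of the support outside the codebook, lowering the risk. So relabeling places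
every codebook of the class near one of the representatives in `M̄`.

Around a fixed representative `cs`, the excess loss `γ(c, ·) - γ(cs, ·)` varies with `c` by no more
than one of the `k` differences `‖x - c j‖² - ‖x - cs j‖²` does. These are linear in the lifted
point `(x, M)`, so symmetrization and contraction bound the expected deviation by `4√k √δ / √n`.
The excess losses are at most `√δ` in absolute value, hence by bounded differences the deviation is
sub-Gaussian with variance proxy `δ / n` around its mean, and a maximum of `|M̄|` such variables
exceeds the largest mean by at most `√(2 log |M̄|) √δ / √n` on average.
-/

open ProbabilityTheory Function
open scoped NNReal ENNReal BigOperators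

theorem integrable_of_measurable_of_abs_le {X : Type*} [MeasurableSpace X] {μ : Measure X}
    [IsFiniteMeasure μ] {f : X → ℝ} (hf : Measurable f) {C : ℝ} (hC : ∀ x, |f x| ≤ C) :
    Integrable f μ :=
  .of_bound hf.aestronglyMeasurable C (.of_forall hC)

theorem abs_integral_le_of_abs_le_s14 {X : Type*} [MeasurableSpace X] {μ : Measure X}
    [IsProbabilityMeasure μ] {f : X → ℝ} {C : ℝ} (hC : ∀ x, |f x| ≤ C) : |∫ x, f x ∂μ| ≤ C := by
  simpa using norm_integral_le_of_norm_le_const (μ := μ) (f := f) (.of_forall hC)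

section BoundedDifferences

theorem hasSubgaussianMGF_of_abs_sub_le {X : Type*} [MeasurableSpace X] {μ : Measure X}
    [IsProbabilityMeasure μ] {g : X → ℝ} (hg : AEMeasurable g μ) {c : ℝ≥0}
    (hc : ∀ x y, |g x - g y| ≤ c) :
    HasSubgaussianMGF (fun x => g x - ∫ y, g y ∂μ) ((c / 2) ^ 2) μ := by
  have : Nonempty X := nonempty_of_isProbabilityMeasure μ
  have hle (x y : X) : g x - c ≤ g y := by linarith [(abs_le.1 (hc x y)).2]
  have hbdd : BddBelow (Set.range g) :=
    ⟨g (Classical.arbitrary X) - c, Set.forall_mem_range.2 (hle _)⟩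
  have hIcc (x : X) : g x ∈ Set.Icc (⨅ y, g y) ((⨅ y, g y) + c) :=
    ⟨ciInf_le hbdd x, by linarith [le_ciInf (hle x)]⟩
  simpa using hasSubgaussianMGF_of_mem_Icc hg (.of_forall hIcc)

theorem integrable_exp_mul_of_abs_le {X : Type*} [MeasurableSpace X] {μ : Measure X}
    [IsFiniteMeasure μ] {f : X → ℝ} (hf : Measurable f) {C : ℝ} (hC : ∀ x, |f x| ≤ C) (t : ℝ) :
    Integrable (fun x => Real.exp (t * f x)) μ := by
  refine integrable_of_measurable_of_abs_le (by fun_prop) (C := Real.exp (|t| * C)) fun x => ?_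
  rw [Real.abs_exp, Real.exp_le_exp]
  calc t * f x ≤ |t| * |f x| := (le_abs_self _).trans (abs_mul _ _).le
    _ ≤ |t| * C := by gcongr; exact hC x

theorem hasSubgaussianMGF_prod {X Y : Type*} [MeasurableSpace X] [MeasurableSpace Y]
    {μ : Measure X} {ν : Measure Y} [IsProbabilityMeasure μ] [IsProbabilityMeasure ν]
    {f : X × Y → ℝ} (hf : Measurable f) {C : ℝ} (hC : ∀ p, |f p| ≤ C) {a b : ℝ≥0}
    (ha : HasSubgaussianMGF (fun x => ∫ y, f (x, y) ∂ν - ∫ p, f p ∂μ.prod ν) a μ)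
    (hb : ∀ x, HasSubgaussianMGF (fun y => f (x, y) - ∫ y, f (x, y) ∂ν) b ν) :
    HasSubgaussianMGF (fun p => f p - ∫ q, f q ∂μ.prod ν) (a + b) (μ.prod ν) where
  integrable_exp_mul := integrable_exp_mul_of_abs_le (by fun_prop)
    (fun p => (abs_sub _ _).trans (add_le_add_left (hC p) _))
  mgf_le t := by
    set m := ∫ q, f q ∂μ.prod ν
    have hexp := integrable_exp_mul_of_abs_le (μ := μ.prod ν) (f := fun p => f p - m) (by fun_prop)
      (fun p => (abs_sub _ _).trans (add_le_add_left (hC p) _)) t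
    calc mgf (fun p => f p - m) (μ.prod ν) t
        = ∫ x, Real.exp (t * (∫ y, f (x, y) ∂ν - m)) *
            mgf (fun y => f (x, y) - ∫ y, f (x, y) ∂ν) ν t ∂μ := by
          rw [mgf, integral_prod _ hexp]
          simp_rw [mgf, ← integral_const_mul, ← Real.exp_add, ← mul_add, sub_add_sub_cancel']
      _ ≤ ∫ x, Real.exp (t * (∫ y, f (x, y) ∂ν - m)) * Real.exp (b * t ^ 2 / 2) ∂μ := by
          refine integral_mono_of_nonneg (.of_forall fun x => mul_nonneg (by positivity) mgf_nonneg)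
            ((ha.integrable_exp_mul t).mul_const _) (.of_forall fun x => ?_)
          dsimp only
          gcongr
          exact (hb x).mgf_le t
      _ ≤ Real.exp (a * t ^ 2 / 2) * Real.exp (b * t ^ 2 / 2) := by
          rw [integral_mul_const]
          gcongr
          exact ha.mgf_le t
      _ = Real.exp (↑(a + b) * t ^ 2 / 2) := by
          rw [← Real.exp_add, NNReal.coe_add]
          ring_nf

theorem abs_sub_le_sum_of_abs_update_sub_le {ι : Type*} [Fintype ι] [DecidableEq ι]
    {X : ι → Type*} {f : (∀ i, X i) → ℝ} {c : ι → ℝ}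
    (hc : ∀ z i x, |f (update z i x) - f z| ≤ c i) (w z : ∀ i, X i) :
    |f w - f z| ≤ ∑ i, c i := by
  suffices ∀ s : Finset ι, |f (s.piecewise w z) - f z| ≤ ∑ i ∈ s, c i by
    simpa using this Finset.univ
  intro s
  induction s using Finset.induction_on with
  | empty => simp
  | insert i s hi ih =>
    rw [Finset.piecewise_insert, Finset.sum_insert hi]
    exact (abs_sub_le _ (f (s.piecewise w z)) _).trans (add_le_add (hc _ _ _) ih)

theorem measurePreserving_head_tail {n : ℕ} {X : Fin (n + 1) → Type*}
    [∀ i, MeasurableSpace (X i)] (μ : ∀ i, Measure (X i)) [∀ i, SigmaFinite (μ i)] :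
    MeasurePreserving (fun z : ∀ i, X i => (z 0, Fin.tail z)) (Measure.pi μ)
      ((μ 0).prod (Measure.pi fun i => μ i.succ)) :=
  measurePreserving_piFinSuccAbove μ 0

theorem measurable_finCons {n : ℕ} {X : Fin (n + 1) → Type*} [∀ i, MeasurableSpace (X i)] :
    Measurable fun p : X 0 × (∀ i : Fin n, X i.succ) => (Fin.cons p.1 p.2 : ∀ i, X i) := by
  refine measurable_pi_iff.2 (Fin.cases ?_ fun i => ?_)
  · exact measurable_fst
  · exact (measurable_pi_apply i).comp measurable_snd

theorem hasSubgaussianMGF_pi_of_abs_update_sub_le {n : ℕ} {X : Fin n → Type*}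
    [∀ i, MeasurableSpace (X i)] (μ : ∀ i, Measure (X i)) [∀ i, IsProbabilityMeasure (μ i)]
    {f : (∀ i, X i) → ℝ} (hf : Measurable f) {c : Fin n → ℝ≥0}
    (hc : ∀ z i x, |f (update z i x) - f z| ≤ c i) :
    HasSubgaussianMGF (fun z => f z - ∫ w, f w ∂Measure.pi μ) (∑ i, (c i / 2) ^ 2)
      (Measure.pi μ) := by
  induction n with
  | zero =>
    have hconst (z : ∀ i, X i) : f z = f default := by rw [Subsingleton.elim z default]
    simp [hconst]
  | succ n ih =>
    let ν := Measure.pi fun i : Fin n => μ i.succ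
    have hsplit := measurePreserving_head_tail μ
    obtain ⟨z₀⟩ : Nonempty (∀ i, X i) := nonempty_of_isProbabilityMeasure (Measure.pi μ)
    have hC (z : ∀ i, X i) : |f z| ≤ |f z₀| + ∑ i, (c i : ℝ) := by
      linarith [abs_sub_abs_le_abs_sub (f z) (f z₀), abs_sub_le_sum_of_abs_update_sub_le hc z z₀]
    have hf' : Measurable fun p : X 0 × (∀ i : Fin n, X i.succ) => f (Fin.cons p.1 p.2) :=
      hf.comp measurable_finCons
    have hslice (x : X 0) : Measurable fun y => f (Fin.cons x y) := hf'.comp measurable_prodMk_left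
    have hint (x : X 0) : Integrable (fun y => f (Fin.cons x y)) ν :=
      integrable_of_measurable_of_abs_le (hslice x) fun y => hC _
    have htail (x : X 0) :
        HasSubgaussianMGF (fun y => f (Fin.cons x y) - ∫ y, f (Fin.cons x y) ∂ν)
          (∑ i : Fin n, (c i.succ / 2) ^ 2) ν :=
      ih _ (hslice x) fun y i x' => by
        simpa only [Fin.cons_update] using hc (Fin.cons x y) i.succ x'
    have hosc (x x' : X 0) : |∫ y, f (Fin.cons x y) ∂ν - ∫ y, f (Fin.cons x' y) ∂ν| ≤ c 0 := by
      rw [← integral_sub (hint x) (hint x')]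
      refine abs_integral_le_of_abs_le_s14 (μ := ν) fun y => ?_
      simpa only [Fin.update_cons_zero] using hc (Fin.cons x' y) 0 x
    have hhead := hasSubgaussianMGF_of_abs_sub_le (μ := μ 0)
      hf'.stronglyMeasurable.integral_prod_right'.measurable.aemeasurable hosc
    rw [← integral_prod _ (integrable_of_measurable_of_abs_le hf' fun p => hC _)] at hhead
    have hprod := hasSubgaussianMGF_prod hf' (fun p => hC _) hhead htail
    rw [← hsplit.map_eq] at hprod
    rw [integral_map hsplit.aemeasurable hf'.aestronglyMeasurable] at hprod
    simpa only [Function.comp_def, Fin.cons_self_tail, Fin.sum_univ_succ]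
      using HasSubgaussianMGF.of_map hsplit.aemeasurable hprod

end BoundedDifferences

theorem integrable_finset_sup' {ι Ω : Type*} [MeasurableSpace Ω] {μ : Measure Ω} {S : Finset ι}
    (hS : S.Nonempty) {Y : ι → Ω → ℝ} (hY : ∀ i ∈ S, Integrable (Y i) μ) :
    Integrable (fun ω => S.sup' hS fun i => Y i ω) μ := by
  simpa only [← Finset.sup'_apply] using
    Finset.sup'_induction hS Y (p := (Integrable · μ)) (fun _ h₁ _ h₂ => h₁.sup h₂) hY

section MaximalInequality

variable {ι Ω : Type*} [MeasurableSpace Ω] {μ : Measure Ω} [IsProbabilityMeasure μ]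
  {S : Finset ι} {Y : ι → Ω → ℝ} {c : ℝ≥0}

theorem mul_integral_sup'_le_of_hasSubgaussianMGF (hS : S.Nonempty)
    (hY : ∀ i ∈ S, HasSubgaussianMGF (Y i) c μ) (t : ℝ) :
    t * ∫ ω, S.sup' hS (fun i => Y i ω) ∂μ ≤ Real.log S.card + c * t ^ 2 / 2 := by
  have hsup : Integrable (fun ω => S.sup' hS fun i => Y i ω) μ :=
    integrable_finset_sup' hS fun i hi => (hY i hi).integrable
  have hsum : Integrable (fun ω => ∑ i ∈ S, Real.exp (t * Y i ω)) μ :=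
    integrable_finsetSum _ fun i hi => (hY i hi).integrable_exp_mul t
  have hle (ω : Ω) : Real.exp (t * S.sup' hS fun i => Y i ω) ≤ ∑ i ∈ S, Real.exp (t * Y i ω) := by
    obtain ⟨i, hi, hmax⟩ := S.exists_mem_eq_sup' hS fun i => Y i ω
    rw [hmax]
    exact Finset.single_le_sum (f := fun i => Real.exp (t * Y i ω)) (fun _ _ => by positivity) hi
  have hexp : Integrable (fun ω => Real.exp (t * S.sup' hS fun i => Y i ω)) μ :=
    hsum.mono' (Real.measurable_exp.comp_aemeasurable
      (hsup.aemeasurable.const_mul t)).aestronglyMeasurable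
      (.of_forall fun ω => by simpa only [Real.norm_eq_abs, Real.abs_exp] using hle ω)
  have hcard : (0 : ℝ) < S.card := by exact_mod_cast hS.card_pos
  rw [← Real.exp_le_exp, Real.exp_add, Real.exp_log hcard]
  calc Real.exp (t * ∫ ω, S.sup' hS (fun i => Y i ω) ∂μ)
      ≤ ∫ ω, Real.exp (t * S.sup' hS fun i => Y i ω) ∂μ := by
        rw [← integral_const_mul]
        exact convexOn_exp.map_integral_le Real.continuous_exp.continuousOn isClosed_univ
          (.of_forall fun _ => Set.mem_univ _) (hsup.const_mul t) hexp
    _ ≤ ∫ ω, ∑ i ∈ S, Real.exp (t * Y i ω) ∂μ := integral_mono hexp hsum hle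
    _ = ∑ i ∈ S, mgf (Y i) μ t := integral_finsetSum _ fun i hi => (hY i hi).integrable_exp_mul t
    _ ≤ S.card * Real.exp (c * t ^ 2 / 2) := by
        rw [← nsmul_eq_mul]
        exact Finset.sum_le_card_nsmul _ _ _ fun i hi => (hY i hi).mgf_le t

theorem integral_sup'_le_of_hasSubgaussianMGF (hS : S.Nonempty)
    (hY : ∀ i ∈ S, HasSubgaussianMGF (Y i) c μ) :
    ∫ ω, S.sup' hS (fun i => Y i ω) ∂μ ≤ √(2 * c * Real.log S.card) := by
  set E := ∫ ω, S.sup' hS (fun i => Y i ω) ∂μ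
  have hquad (t : ℝ) : 0 ≤ (c / 2 : ℝ) * (t * t) + -E * t + Real.log S.card := by
    linarith [mul_integral_sup'_le_of_hasSubgaussianMGF hS hY t]
  refine Real.le_sqrt_of_sq_le ?_
  linarith [discrim_le_zero hquad, show discrim (c / 2 : ℝ) (-E) (Real.log S.card) =
    E ^ 2 - 2 * c * Real.log S.card by rw [discrim]; ring]

theorem integral_sup'_le_add_of_hasSubgaussianMGF_sub (hS : S.Nonempty) {m : ℝ}
    (hY : ∀ i ∈ S, HasSubgaussianMGF (fun ω => Y i ω - ∫ ω', Y i ω' ∂μ) c μ)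
    (hm : ∀ i ∈ S, ∫ ω, Y i ω ∂μ ≤ m) :
    ∫ ω, S.sup' hS (fun i => Y i ω) ∂μ ≤ m + √(2 * c * Real.log S.card) := by
  have hYint (i) (hi : i ∈ S) : Integrable (Y i) μ := by
    simpa only [Pi.add_def, sub_add_cancel] using
      (hY i hi).integrable.add (integrable_const (∫ ω, Y i ω ∂μ))
  have hcentred := integrable_finset_sup' hS fun i hi => (hY i hi).integrable
  calc ∫ ω, S.sup' hS (fun i => Y i ω) ∂μ
      ≤ ∫ ω, (m + S.sup' hS fun i => Y i ω - ∫ ω', Y i ω' ∂μ) ∂μ := by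
        refine integral_mono (integrable_finset_sup' hS hYint)
          ((integrable_const m).add hcentred) fun ω => Finset.sup'_le _ _ fun i hi => ?_
        linarith [hm i hi, Finset.le_sup' (fun i => Y i ω - ∫ ω', Y i ω' ∂μ) hi]
    _ = m + ∫ ω, (S.sup' hS fun i => Y i ω - ∫ ω', Y i ω' ∂μ) ∂μ := by
        rw [integral_add (integrable_const m) hcentred, integral_const, probReal_univ, one_smul]
    _ ≤ m + √(2 * c * Real.log S.card) := by
        gcongr
        exact integral_sup'_le_of_hasSubgaussianMGF hS hY

end MaximalInequality

section Rademacher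

theorem bddAbove_range_of_memℓp {T : Type*} {f : T → ℝ} (hf : Memℓp f ∞) :
    BddAbove (Set.range f) := by
  obtain ⟨C, hC⟩ := hf.bddAbove
  exact ⟨C, Set.forall_mem_range.2 fun t =>
    (le_abs_self (f t)).trans (hC (Set.mem_range_self t))⟩

theorem memℓp_sum_mul {T ι : Type*} [Fintype ι] {F : T → ι → ℝ} (hF : ∀ i, Memℓp (F · i) ∞)
    (a : ι → ℝ) : Memℓp (fun t => ∑ i, a i * F t i) ∞ := by
  simpa using Memℓp.finsetSum Finset.univ fun i _ => (hF i).const_mul (a i)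

/-- The Rademacher complexity of a family of real vectors, which controls their uniform deviation by
symmetrization. It is not divided by the number of coordinates. -/
def rademacher {T ι : Type*} [Fintype ι] [DecidableEq ι] (F : T → ι → ℝ) : ℝ :=
  𝔼 ε : ι → ℤˣ, ⨆ t, ∑ i, (ε i : ℝ) * F t i

variable {ι κ : Type*} [Fintype ι] [DecidableEq ι] [Fintype κ] [DecidableEq κ]

theorem expect_neg_sign (g : (ι → ℤˣ) → ℝ) : 𝔼 ε, g (-ε) = 𝔼 ε, g ε :=
  Fintype.expect_equiv (Equiv.neg _) _ _ fun _ => rfl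

theorem expect_mul_sign (η : ι → ℤˣ) (g : (ι → ℤˣ) → ℝ) : 𝔼 ε, g (η * ε) = 𝔼 ε, g ε :=
  Fintype.expect_equiv (Equiv.mulLeft η) _ _ fun _ => rfl

theorem expect_sign_mul_sign (i j : ι) :
    𝔼 ε : ι → ℤˣ, (ε i : ℝ) * (ε j : ℝ) = if i = j then 1 else 0 := by
  split_ifs with hij
  · subst hij
    have (ε : ι → ℤˣ) : (ε i : ℝ) * (ε i : ℝ) = 1 := by
      rcases Int.units_eq_one_or (ε i) with h | h <;> simp [h]
    simp_rw [this, Fintype.expect_one]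
  · have hflip := expect_mul_sign (Pi.mulSingle i (-1)) fun ε : ι → ℤˣ => (ε i : ℝ) * (ε j : ℝ)
    simp only [Pi.mul_apply, Pi.mulSingle_eq_same, Pi.mulSingle_eq_of_ne' hij, neg_mul, one_mul,
      Units.val_neg, Int.cast_neg, Finset.expect_neg_distrib] at hflip
    linarith

theorem abs_le_expect_abs_sum_sign_mul (w : ι → ℝ) (i : ι) :
    |w i| ≤ 𝔼 ε : ι → ℤˣ, |∑ j, (ε j : ℝ) * w j| := by
  have hcoord : 𝔼 ε : ι → ℤˣ, (ε i : ℝ) * ∑ j, (ε j : ℝ) * w j = w i := by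
    simp_rw [Finset.mul_sum, ← mul_assoc]
    rw [Finset.expect_sum_comm]
    simp_rw [← Finset.expect_mul, expect_sign_mul_sign, ite_mul, one_mul, zero_mul,
      Finset.sum_ite_eq, Finset.mem_univ, if_true]
  have hsign (ε : ι → ℤˣ) : |(ε i : ℝ)| = 1 := by
    rcases Int.units_eq_one_or (ε i) with h | h <;> simp [h]
  calc |w i| ≤ 𝔼 ε : ι → ℤˣ, |(ε i : ℝ) * ∑ j, (ε j : ℝ) * w j| :=
        hcoord ▸ Finset.abs_expect_le _ _
    _ = 𝔼 ε : ι → ℤˣ, |∑ j, (ε j : ℝ) * w j| := by simp_rw [abs_mul, hsign, one_mul]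

theorem expect_norm_sum_sign_smul_sq {E : Type*} [NormedAddCommGroup E] [InnerProductSpace ℝ E]
    (w : ι → E) : 𝔼 ε : ι → ℤˣ, ‖∑ i, (ε i : ℝ) • w i‖ ^ 2 = ∑ i, ‖w i‖ ^ 2 := by
  simp_rw [← real_inner_self_eq_norm_sq, sum_inner, inner_sum, real_inner_smul_left,
    real_inner_smul_right, ← mul_assoc]
  simp_rw [Finset.expect_sum_comm, ← Finset.expect_mul, expect_sign_mul_sign, ite_mul, one_mul,
    zero_mul, Finset.sum_ite_eq, Finset.mem_univ, if_true]

theorem rademacher_neg {T : Type*} (F : T → ι → ℝ) :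
    rademacher (fun t i => -F t i) = rademacher F := by
  rw [rademacher, rademacher, ← expect_neg_sign]
  simp

theorem rademacher_inner_le {E T : Type*} [NormedAddCommGroup E] [InnerProductSpace ℝ E]
    [Nonempty T] (w : ι → E) {g : T → E} {r : ℝ} (hg : ∀ t, ‖g t‖ ≤ r) :
    rademacher (fun t i => inner ℝ (w i) (g t)) ≤ r * √(∑ i, ‖w i‖ ^ 2) := by
  have hr : 0 ≤ r := (norm_nonneg _).trans (hg (Classical.arbitrary T))
  have hsup (ε : ι → ℤˣ) :
      ⨆ t, ∑ i, (ε i : ℝ) * inner ℝ (w i) (g t) ≤ r * ‖∑ i, (ε i : ℝ) • w i‖ := by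
    refine ciSup_le fun t => ?_
    calc ∑ i, (ε i : ℝ) * inner ℝ (w i) (g t) = inner ℝ (∑ i, (ε i : ℝ) • w i) (g t) := by
          simp_rw [sum_inner, real_inner_smul_left]
      _ ≤ ‖∑ i, (ε i : ℝ) • w i‖ * r := (real_inner_le_norm _ _).trans (by gcongr; exact hg t)
      _ = r * ‖∑ i, (ε i : ℝ) • w i‖ := mul_comm _ _
  calc rademacher (fun t i => inner ℝ (w i) (g t))
      ≤ 𝔼 ε : ι → ℤˣ, r * ‖∑ i, (ε i : ℝ) • w i‖ := Finset.expect_le_expect fun ε _ => hsup ε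
    _ = r * 𝔼 ε : ι → ℤˣ, ‖∑ i, (ε i : ℝ) • w i‖ := (Finset.mul_expect _ _ _).symm
    _ ≤ r * √(∑ i, ‖w i‖ ^ 2) := by
        gcongr
        refine Real.le_sqrt_of_sq_le ?_
        simpa [expect_norm_sum_sign_smul_sq] using Finset.expect_mul_sq_le_sq_mul_sq Finset.univ
          (fun ε : ι → ℤˣ => ‖∑ i, (ε i : ℝ) • w i‖) (fun _ => 1)

variable {T : Type*} [Nonempty T]

theorem ciSup_add_add_ciSup_sub_le {A f : T → ℝ} {u : T → κ → ℝ} (hA : Memℓp A ∞)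
    (hu : ∀ j, Memℓp (u · j) ∞) (hfu : ∀ s t, ∃ j, |f s - f t| ≤ |u s j - u t j|) :
    (⨆ t, (A t + f t)) + ⨆ t, (A t - f t) ≤
      2 * 𝔼 η : κ → ℤˣ, ⨆ t, (A t + ∑ j, (η j : ℝ) * u t j) := by
  set G : (κ → ℤˣ) → ℝ := fun η => ⨆ t, (A t + ∑ j, (η j : ℝ) * u t j)
  have hleG (η : κ → ℤˣ) (t : T) : A t + ∑ j, (η j : ℝ) * u t j ≤ G η :=
    le_ciSup (bddAbove_range_of_memℓp (hA.add (memℓp_sum_mul hu _))) t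
  have hpair (s t : T) : (A s + f s) + (A t - f t) ≤ 2 * 𝔼 η, G η := by
    obtain ⟨j, hj⟩ := hfu s t
    have hG (η : κ → ℤˣ) : A s + A t + |∑ j, (η j : ℝ) * (u s j - u t j)| ≤ G η + G (-η) := by
      have hs := hleG η s
      have ht := hleG (-η) t
      have hs' := hleG (-η) s
      have ht' := hleG η t
      simp only [Pi.neg_apply, Units.val_neg, Int.cast_neg, neg_mul, Finset.sum_neg_distrib]
        at ht hs'
      simp only [mul_sub, Finset.sum_sub_distrib]
      rcases abs_cases (∑ j, (η j : ℝ) * u s j - ∑ j, (η j : ℝ) * u t j) with h | h <;> linarith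
    calc (A s + f s) + (A t - f t) ≤ A s + A t + |u s j - u t j| := by
          linarith [le_abs_self (f s - f t)]
      _ ≤ A s + A t + 𝔼 η : κ → ℤˣ, |∑ j, (η j : ℝ) * (u s j - u t j)| := by
          gcongr
          exact abs_le_expect_abs_sum_sign_mul (fun j => u s j - u t j) j
      _ = 𝔼 η : κ → ℤˣ, (A s + A t + |∑ j, (η j : ℝ) * (u s j - u t j)|) := by
          rw [Finset.expect_add_distrib, Fintype.expect_const]
      _ ≤ 𝔼 η, (G η + G (-η)) := Finset.expect_le_expect fun η _ => hG η
      _ = 2 * 𝔼 η, G η := by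
          rw [Finset.expect_add_distrib, expect_neg_sign G, two_mul]
  exact ciSup_add_ciSup_le hpair

theorem expect_finCons {α : Type*} [Fintype α] {n : ℕ} (g : (Fin (n + 1) → α) → ℝ) :
    𝔼 z, g z = 𝔼 y : Fin n → α, 𝔼 a, g (Fin.cons a y) := by
  rw [Finset.expect_comm, ← Fintype.expect_equiv (Fin.consEquiv fun _ => α) _ _ fun _ => rfl]
  exact Finset.expect_product _ _ _

theorem expect_intUnits (g : ℤˣ → ℝ) : 𝔼 e, g e = (g 1 + g (-1)) / 2 := by
  rw [Fintype.expect_eq_sum_div_card, UnitsInt.univ, Finset.sum_pair (by decide),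
    Fintype.card_units_int, Nat.cast_ofNat]

theorem expect_ciSup_add_sum_sign_mul_le {n : ℕ} {A : T → ℝ} {F : T → Fin n → ℝ}
    {u : T → Fin n → κ → ℝ} (hA : Memℓp A ∞) (hF : ∀ i, Memℓp (F · i) ∞)
    (hu : ∀ i j, Memℓp (u · i j) ∞)
    (hFu : ∀ i s t, ∃ j, |F s i - F t i| ≤ |u s i j - u t i j|) :
    𝔼 ε : Fin n → ℤˣ, ⨆ t, (A t + ∑ i, (ε i : ℝ) * F t i) ≤
      𝔼 η : Fin n → κ → ℤˣ, ⨆ t, (A t + ∑ i, ∑ j, (η i j : ℝ) * u t i j) := by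
  induction n generalizing A with
  | zero => simp
  | succ n ih =>
    have hstep (ε : Fin n → ℤˣ) :
        𝔼 e : ℤˣ, (⨆ t, (A t + ∑ i, ((Fin.cons e ε : Fin (n + 1) → ℤˣ) i : ℝ) * F t i)) ≤
          𝔼 η₀ : κ → ℤˣ, ⨆ t, (A t + ∑ j, (η₀ j : ℝ) * u t 0 j +
            ∑ i : Fin n, (ε i : ℝ) * F t i.succ) := by
      set S : T → ℝ := fun t => ∑ i : Fin n, (ε i : ℝ) * F t i.succ
      have hcons (e : ℤˣ) (t : T) : A t + ∑ i, ((Fin.cons e ε : Fin (n + 1) → ℤˣ) i : ℝ) * F t i =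
          A t + S t + (e : ℝ) * F t 0 := by
        simp only [Fin.sum_univ_succ, Fin.cons_zero, Fin.cons_succ, S]
        ring
      have hS : Memℓp S ∞ := memℓp_sum_mul (fun i : Fin n => hF i.succ) fun i => ε i
      have hpair := ciSup_add_add_ciSup_sub_le (hA.add hS) (hu 0) (hFu 0)
      rw [expect_intUnits, div_le_iff₀' two_pos]
      simp only [hcons, Units.val_one, Units.val_neg, Int.cast_one, Int.cast_neg, one_mul, neg_mul]
      simpa only [Pi.add_apply, sub_eq_add_neg, add_right_comm (A _) (S _)] using hpair
    calc _ ≤ 𝔼 ε : Fin n → ℤˣ, 𝔼 η₀ : κ → ℤˣ, ⨆ t, (A t + ∑ j, (η₀ j : ℝ) * u t 0 j +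
            ∑ i : Fin n, (ε i : ℝ) * F t i.succ) := by
          rw [expect_finCons]
          exact Finset.expect_le_expect fun ε _ => hstep ε
      _ ≤ 𝔼 η₀ : κ → ℤˣ, 𝔼 η : Fin n → κ → ℤˣ, ⨆ t, (A t + ∑ j, (η₀ j : ℝ) * u t 0 j +
            ∑ i : Fin n, ∑ j, (η i j : ℝ) * u t i.succ j) := by
          rw [Finset.expect_comm]
          exact Finset.expect_le_expect fun η₀ _ =>
            ih (hA.add (memℓp_sum_mul (hu 0) _)) (fun i => hF i.succ) (fun i => hu i.succ)
              fun i => hFu i.succ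
      _ = _ := by
          rw [Finset.expect_comm, expect_finCons]
          simp_rw [Fin.sum_univ_succ, Fin.cons_zero, Fin.cons_succ, add_assoc]

theorem rademacher_le_of_forall_exists_abs_sub_le {n : ℕ} {F : T → Fin n → ℝ}
    {u : T → Fin n → κ → ℝ} (hF : ∀ i, Memℓp (F · i) ∞) (hu : ∀ i j, Memℓp (u · i j) ∞)
    (hFu : ∀ i s t, ∃ j, |F s i - F t i| ≤ |u s i j - u t i j|) :
    rademacher F ≤ rademacher fun t (p : Fin n × κ) => u t p.1 p.2 := by
  have h := expect_ciSup_add_sum_sign_mul_le (A := 0) zero_memℓp hF hu hFu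
  simp only [Pi.zero_apply, zero_add] at h
  refine h.trans_eq (Fintype.expect_equiv (Equiv.curry _ _ _).symm _ _ fun η => ?_)
  simp_rw [Fintype.sum_prod_type]
  rfl

end Rademacher

section Symmetrization

theorem measurable_ciSup_of_continuous {T Z : Type*} [TopologicalSpace Z] [MeasurableSpace Z]
    [OpensMeasurableSpace Z] {f : T → Z → ℝ} (hf : ∀ t, Continuous (f t))
    (hbdd : ∀ z, BddAbove (Set.range fun t => f t z)) : Measurable fun z => ⨆ t, f t z :=
  (lowerSemicontinuous_ciSup hbdd fun t => (hf t).lowerSemicontinuous).measurable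

theorem abs_ciSup_le {T : Type*} [Nonempty T] {a : T → ℝ} {C : ℝ} (ha : ∀ t, |a t| ≤ C) :
    |⨆ t, a t| ≤ C := by
  have hbdd : BddAbove (Set.range a) :=
    ⟨C, Set.forall_mem_range.2 fun t => (le_abs_self _).trans (ha t)⟩
  let t₀ := Classical.arbitrary T
  exact abs_le.2 ⟨(abs_le.1 (ha t₀)).1.trans (le_ciSup hbdd t₀),
    ciSup_le fun t => (le_abs_self _).trans (ha t)⟩

theorem integrable_ciSup_of_continuous {T Z : Type*} [Nonempty T] [TopologicalSpace Z]
    [MeasurableSpace Z] [OpensMeasurableSpace Z] {μ : Measure Z} [IsFiniteMeasure μ]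
    {f : T → Z → ℝ} {C : ℝ} (hf : ∀ t, Continuous (f t)) (hC : ∀ t z, |f t z| ≤ C) :
    Integrable (fun z => ⨆ t, f t z) μ :=
  integrable_of_measurable_of_abs_le (measurable_ciSup_of_continuous hf fun z =>
    ⟨C, Set.forall_mem_range.2 fun t => (le_abs_self _).trans (hC t z)⟩)
    fun z => abs_ciSup_le (hC · z)

theorem abs_sum_sign_mul_le {ι : Type*} [Fintype ι] (ε : ι → ℤˣ) {a : ι → ℝ} {C : ℝ}
    (ha : ∀ i, |a i| ≤ C) : |∑ i, (ε i : ℝ) * a i| ≤ Fintype.card ι * C := by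
  have hsign (i : ι) : |(ε i : ℝ) * a i| ≤ C := by
    rcases Int.units_eq_one_or (ε i) with h | h <;> simpa [h] using ha i
  calc |∑ i, (ε i : ℝ) * a i| ≤ ∑ i, |(ε i : ℝ) * a i| := Finset.abs_sum_le_sum_abs _ _
    _ ≤ Fintype.card ι * C := by
        rw [← nsmul_eq_mul]
        exact Finset.sum_le_card_nsmul _ _ C fun i _ => hsign i

theorem ciSup_sum_sign_mul_sub_le {T ι : Type*} [Nonempty T] [Fintype ι] {a b : T → ι → ℝ}
    (ha : ∀ i, Memℓp (a · i) ∞) (hb : ∀ i, Memℓp (b · i) ∞) (ε : ι → ℤˣ) :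
    ⨆ t, ∑ i, (ε i : ℝ) * (a t i - b t i) ≤
      (⨆ t, ∑ i, (ε i : ℝ) * a t i) + ⨆ t, ∑ i, ((-ε) i : ℝ) * b t i := by
  refine ciSup_le fun t => ?_
  calc ∑ i, (ε i : ℝ) * (a t i - b t i)
      = ∑ i, (ε i : ℝ) * a t i + ∑ i, ((-ε) i : ℝ) * b t i := by
        simp [mul_sub, Finset.sum_sub_distrib, ← sub_eq_add_neg]
    _ ≤ _ := add_le_add (le_ciSup (bddAbove_range_of_memℓp (memℓp_sum_mul ha _)) t)
        (le_ciSup (bddAbove_range_of_memℓp (memℓp_sum_mul hb _)) t)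

theorem integral_comp_measurePreserving {Y Z : Type*} [MeasurableSpace Y] [MeasurableSpace Z]
    {μ : Measure Y} {ν : Measure Z} {φ : Z → Y} (hφ : MeasurePreserving φ ν μ) {f : Y → ℝ}
    (hf : AEStronglyMeasurable f μ) : ∫ z, f (φ z) ∂ν = ∫ y, f y ∂μ := by
  rw [← hφ.map_eq] at hf ⊢
  exact (integral_map hφ.aemeasurable hf).symm

theorem integral_expect {Z κ : Type*} [MeasurableSpace Z] {μ : Measure Z} [Fintype κ]
    {f : κ → Z → ℝ} (hf : ∀ i, Integrable (f i) μ) :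
    ∫ z, 𝔼 i, f i z ∂μ = 𝔼 i, ∫ z, f i z ∂μ := by
  simp_rw [Fintype.expect_eq_sum_div_card]
  rw [integral_div, integral_finsetSum _ fun i _ => hf i]

theorem integral_pi_sum_sub {ι X : Type*} [Fintype ι] [MeasurableSpace X] (P : Measure X)
    [IsProbabilityMeasure P] {f : X → ℝ} (hf : Integrable f P) (a : ι → ℝ) :
    ∫ x, ∑ i, (f (x i) - a i) ∂(Measure.pi fun _ : ι => P) = ∑ i, (∫ y, f y ∂P - a i) := by
  have hcoord (i : ι) : Integrable (fun x : ι → X => f (x i)) (Measure.pi fun _ => P) :=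
    integrable_comp_eval hf
  rw [integral_finsetSum Finset.univ (f := fun i (x : ι → X) => f (x i) - a i)
    fun i _ => (hcoord i).sub (integrable_const _)]
  refine Finset.sum_congr rfl fun i _ => ?_
  rw [integral_sub (hcoord i) (integrable_const _), integral_const, probReal_univ, one_smul,
    integral_comp_eval (μ := fun _ : ι => P) hf.aestronglyMeasurable]

theorem integrable_ciSup_sum_sign_mul {T ι Z : Type*} [Nonempty T] [Fintype ι]
    [TopologicalSpace Z] [MeasurableSpace Z] [OpensMeasurableSpace Z] {μ : Measure Z}
    [IsFiniteMeasure μ] {f : T → ι → Z → ℝ} {C : ℝ} (hf : ∀ t i, Continuous (f t i))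
    (hC : ∀ t i z, |f t i z| ≤ C) (ε : ι → ℤˣ) :
    Integrable (fun z => ⨆ t, ∑ i, (ε i : ℝ) * f t i z) μ :=
  integrable_ciSup_of_continuous (by fun_prop) fun t z => abs_sum_sign_mul_le ε (hC t · z)

theorem integrable_ciSup_sum {T ι Z : Type*} [Nonempty T] [Fintype ι]
    [TopologicalSpace Z] [MeasurableSpace Z] [OpensMeasurableSpace Z] {μ : Measure Z}
    [IsFiniteMeasure μ] {f : T → ι → Z → ℝ} {C : ℝ} (hf : ∀ t i, Continuous (f t i))
    (hC : ∀ t i z, |f t i z| ≤ C) : Integrable (fun z => ⨆ t, ∑ i, f t i z) μ := by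
  simpa using integrable_ciSup_sum_sign_mul (μ := μ) hf hC 1

variable {T ι X : Type*} [Nonempty T] [Fintype ι] [TopologicalSpace X]
  [SecondCountableTopology X] [MeasurableSpace X] [BorelSpace X] {F : T → X → ℝ} {C : ℝ}

theorem integrable_ciSup_sum_integral_sub (P : Measure X) [IsProbabilityMeasure P]
    (hF : ∀ t, Continuous (F t)) (hC : ∀ t x, |F t x| ≤ C) :
    Integrable (fun x => ⨆ t, ∑ i, (∫ y, F t y ∂P - F t (x i))) (Measure.pi fun _ : ι => P) :=
  integrable_ciSup_sum (by fun_prop) fun t i x =>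
    (abs_sub _ _).trans (add_le_add (abs_integral_le_of_abs_le_s14 (hC t)) (hC t (x i)))

theorem integral_ciSup_sum_integral_sub_le (P : Measure X) [IsProbabilityMeasure P]
    (hF : ∀ t, Continuous (F t)) (hC : ∀ t x, |F t x| ≤ C) :
    ∫ x, ⨆ t, ∑ i, (∫ y, F t y ∂P - F t (x i)) ∂(Measure.pi fun _ : ι => P) ≤
      ∫ z, ⨆ t, ∑ i, (F t (z i).2 - F t (z i).1) ∂(Measure.pi fun _ : ι => P.prod P) := by
  set μ : Measure (ι → X) := Measure.pi fun _ => P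
  set G : (ι → X) × (ι → X) → ℝ := fun p => ⨆ t, ∑ i, (F t (p.2 i) - F t (p.1 i))
  have hint (t : T) : Integrable (F t) P :=
    integrable_of_measurable_of_abs_le (hF t).measurable (hC t)
  have hbound (t : T) (x y : X) : |F t y - F t x| ≤ C + C :=
    (abs_sub _ _).trans (add_le_add (hC t y) (hC t x))
  have hsum (x y : ι → X) (t : T) : |∑ i, (F t (y i) - F t (x i))| ≤ Fintype.card ι * (C + C) := by
    simpa using abs_sum_sign_mul_le 1 fun i => hbound t (x i) (y i)
  have hG : Integrable G (μ.prod μ) :=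
    integrable_ciSup_sum (by fun_prop) fun t i p => hbound t (p.1 i) (p.2 i)
  have hghost (x : ι → X) : ⨆ t, ∑ i, (∫ y, F t y ∂P - F t (x i)) ≤ ∫ y, G (x, y) ∂μ := by
    refine ciSup_le fun t => ?_
    rw [← integral_pi_sum_sub P (hint t)]
    refine integral_mono ?_ ?_ fun y => le_ciSup (f := fun t => ∑ i, (F t (y i) - F t (x i))) ?_ t
    · exact integrable_of_measurable_of_abs_le (by fun_prop) fun y => hsum x y t
    · exact integrable_ciSup_sum (by fun_prop) fun t i y => hbound t (x i) (y i)
    · exact bddAbove_range_of_memℓp (memℓp_infty ⟨_, Set.forall_mem_range.2 (hsum x y)⟩)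
  calc ∫ x, ⨆ t, ∑ i, (∫ y, F t y ∂P - F t (x i)) ∂μ ≤ ∫ x, ∫ y, G (x, y) ∂μ ∂μ :=
        integral_mono (integrable_ciSup_sum_integral_sub P hF hC) hG.integral_prod_left hghost
    _ = ∫ p, G p ∂(μ.prod μ) := (integral_prod _ hG).symm
    _ = ∫ z, ⨆ t, ∑ i, (F t (z i).2 - F t (z i).1) ∂(Measure.pi fun _ : ι => P.prod P) := by
        rw [← (measurePreserving_arrowProdEquivProdArrow X X ι (fun _ => P) fun _ => P).map_eq]
        exact integral_map_equiv _ _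

theorem integral_ciSup_sum_sign_mul_sub (P : Measure X) [IsProbabilityMeasure P]
    (hF : ∀ t, Continuous (F t)) (hC : ∀ t x, |F t x| ≤ C) (ε : ι → ℤˣ) :
    ∫ z, ⨆ t, ∑ i, (ε i : ℝ) * (F t (z i).2 - F t (z i).1)
        ∂(Measure.pi fun _ : ι => P.prod P) =
      ∫ z, ⨆ t, ∑ i, (F t (z i).2 - F t (z i).1) ∂(Measure.pi fun _ : ι => P.prod P) := by
  set ν : Measure (ι → X × X) := Measure.pi fun _ => P.prod P
  let swap (i : ι) : X × X → X × X := if ε i = 1 then id else Prod.swap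
  have hswap : MeasurePreserving (fun z i => swap i (z i)) ν ν := by
    refine measurePreserving_pi _ _ fun i => ?_
    by_cases h : ε i = 1
    · simpa only [swap, if_pos h] using MeasurePreserving.id _
    · simpa only [swap, if_neg h] using Measure.measurePreserving_swap
  have hsign (i : ι) (t : T) (p : X × X) :
      F t (swap i p).2 - F t (swap i p).1 = (ε i : ℝ) * (F t p.2 - F t p.1) := by
    rcases Int.units_eq_one_or (ε i) with h | h <;> simp [swap, h]
  have hint : Integrable (fun z : ι → X × X => ⨆ t, ∑ i, (F t (z i).2 - F t (z i).1)) ν :=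
    integrable_ciSup_sum (by fun_prop) fun t i z =>
      (abs_sub _ _).trans (add_le_add (hC t _) (hC t _))
  rw [← integral_comp_measurePreserving hswap hint.aestronglyMeasurable]
  simp_rw [hsign]

theorem integral_ciSup_sum_sign_mul_sub_le (P : Measure X) [IsProbabilityMeasure P]
    (hF : ∀ t, Continuous (F t)) (hC : ∀ t x, |F t x| ≤ C) (ε : ι → ℤˣ) :
    ∫ z, ⨆ t, ∑ i, (ε i : ℝ) * (F t (z i).2 - F t (z i).1)
        ∂(Measure.pi fun _ : ι => P.prod P) ≤
      (∫ x, ⨆ t, ∑ i, (ε i : ℝ) * F t (x i) ∂(Measure.pi fun _ => P)) +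
        ∫ x, ⨆ t, ∑ i, ((-ε) i : ℝ) * F t (x i) ∂(Measure.pi fun _ => P) := by
  set μ : Measure (ι → X) := Measure.pi fun _ => P
  set ν : Measure (ι → X × X) := Measure.pi fun _ => P.prod P
  set S : (ι → ℤˣ) → (ι → X) → ℝ := fun ε x => ⨆ t, ∑ i, (ε i : ℝ) * F t (x i)
  have hS (ε : ι → ℤˣ) : Integrable (S ε) μ :=
    integrable_ciSup_sum_sign_mul (f := fun t i (x : ι → X) => F t (x i)) (by fun_prop)
      (fun t i x => hC t (x i)) ε
  have hfst : MeasurePreserving (fun z i => (z i).1) ν μ :=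
    measurePreserving_pi _ _ fun _ => measurePreserving_fst
  have hsnd : MeasurePreserving (fun z i => (z i).2) ν μ :=
    measurePreserving_pi _ _ fun _ => measurePreserving_snd
  have hS₂ : Integrable (fun z : ι → X × X => S ε fun i => (z i).2) ν :=
    hsnd.integrable_comp_of_integrable (hS ε)
  have hS₁ : Integrable (fun z : ι → X × X => S (-ε) fun i => (z i).1) ν :=
    hfst.integrable_comp_of_integrable (hS (-ε))
  have hbdd (x : X) : Memℓp (F · x) ∞ := memℓp_infty ⟨C, Set.forall_mem_range.2 (hC · x)⟩
  calc _ ≤ ∫ z, (S ε (fun i => (z i).2) + S (-ε) fun i => (z i).1) ∂ν :=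
        integral_mono (integrable_ciSup_sum_sign_mul (C := C + C) (by fun_prop) (fun t i z =>
          (abs_sub _ _).trans (add_le_add (hC t _) (hC t _))) ε) (hS₂.add hS₁)
          fun z => ciSup_sum_sign_mul_sub_le (fun i => hbdd (z i).2) (fun i => hbdd (z i).1) ε
    _ = (∫ x, S ε x ∂μ) + ∫ x, S (-ε) x ∂μ := by
        rw [integral_add hS₂ hS₁,
          integral_comp_measurePreserving hsnd (hS ε).aestronglyMeasurable,
          integral_comp_measurePreserving hfst (hS (-ε)).aestronglyMeasurable]

variable [DecidableEq ι]

theorem integrable_rademacher (P : Measure X) [IsProbabilityMeasure P]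
    (hF : ∀ t, Continuous (F t)) (hC : ∀ t x, |F t x| ≤ C) :
    Integrable (fun x => rademacher fun t i => F t (x i)) (Measure.pi fun _ : ι => P) := by
  simp_rw [rademacher, Fintype.expect_eq_sum_div_card]
  exact (integrable_finsetSum _ fun ε _ => integrable_ciSup_sum_sign_mul
    (f := fun t i (x : ι → X) => F t (x i)) (by fun_prop) (fun t i x => hC t (x i)) ε).div_const _

theorem integral_ciSup_sum_integral_sub_le_rademacher (P : Measure X) [IsProbabilityMeasure P]
    (hF : ∀ t, Continuous (F t)) (hC : ∀ t x, |F t x| ≤ C) :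
    ∫ x, ⨆ t, ∑ i, (∫ y, F t y ∂P - F t (x i)) ∂(Measure.pi fun _ : ι => P) ≤
      2 * ∫ x, rademacher (fun t i => F t (x i)) ∂(Measure.pi fun _ : ι => P) := by
  set S : (ι → ℤˣ) → ℝ := fun ε => ∫ x, ⨆ t, ∑ i, (ε i : ℝ) * F t (x i) ∂(Measure.pi fun _ => P)
  have hsymm (ε : ι → ℤˣ) :
      ∫ x, ⨆ t, ∑ i, (∫ y, F t y ∂P - F t (x i)) ∂(Measure.pi fun _ : ι => P) ≤ S ε + S (-ε) :=
    ((integral_ciSup_sum_integral_sub_le P hF hC).trans_eq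
      (integral_ciSup_sum_sign_mul_sub P hF hC ε).symm).trans
        (integral_ciSup_sum_sign_mul_sub_le P hF hC ε)
  calc _ ≤ 𝔼 ε, (S ε + S (-ε)) := by
        rw [← Fintype.expect_const (ι := ι → ℤˣ) (∫ x, ⨆ t, ∑ i, (∫ y, F t y ∂P - F t (x i))
          ∂(Measure.pi fun _ : ι => P))]
        exact Finset.expect_le_expect fun ε _ => hsymm ε
    _ = 2 * 𝔼 ε, S ε := by rw [Finset.expect_add_distrib, expect_neg_sign S, two_mul]
    _ = 2 * ∫ x, rademacher (fun t i => F t (x i)) ∂(Measure.pi fun _ : ι => P) := by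
        simp_rw [rademacher]
        rw [integral_expect fun ε => integrable_ciSup_sum_sign_mul
          (f := fun t i (x : ι → X) => F t (x i)) (by fun_prop) (fun t i x => hC t (x i)) ε]

end Symmetrization

section UniformDeviation

/-- The uniform deviation `sup_t |(P − Pₙ) (F t)|` between `P` and the empirical measure `Pₙ` of the
sample `x` over the family of functions `F`. -/
def uniformDeviation {T X : Type*} [MeasurableSpace X] (P : Measure X) (F : T → X → ℝ) {n : ℕ}
    (x : Fin n → X) : ℝ :=
  ⨆ t, |∫ y, F t y ∂P - (∑ j, F t (x j)) / n|

theorem ciSup_abs_le_add {T : Type*} {a : T → ℝ} (ha : Memℓp a ∞) {t₀ : T} (h₀ : a t₀ = 0) :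
    ⨆ t, |a t| ≤ (⨆ t, a t) + ⨆ t, -a t := by
  have : Nonempty T := ⟨t₀⟩
  have hle (t : T) : a t ≤ ⨆ t, a t := le_ciSup (bddAbove_range_of_memℓp ha) t
  have hle_neg (t : T) : -a t ≤ ⨆ t, -a t := le_ciSup (bddAbove_range_of_memℓp ha.neg) t
  refine ciSup_le fun t => ?_
  rcases abs_cases (a t) with h | h <;> linarith [hle t, hle t₀, hle_neg t, hle_neg t₀]

theorem abs_ciSup_sub_ciSup_le {T : Type*} [Nonempty T] {a b : T → ℝ} {C : ℝ} (ha : Memℓp a ∞)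
    (hb : Memℓp b ∞) (hab : ∀ t, |a t - b t| ≤ C) : |(⨆ t, a t) - ⨆ t, b t| ≤ C := by
  have hab' (t : T) := abs_le.1 (hab t)
  refine abs_le.2 ⟨?_, ?_⟩
  · have : ⨆ t, b t ≤ (⨆ t, a t) + C := ciSup_le fun t => by
      linarith [le_ciSup (bddAbove_range_of_memℓp ha) t, (hab' t).1]
    linarith
  · have : ⨆ t, a t ≤ (⨆ t, b t) + C := ciSup_le fun t => by
      linarith [le_ciSup (bddAbove_range_of_memℓp hb) t, (hab' t).2]
    linarith

variable {T X : Type*} [MeasurableSpace X] {F : T → X → ℝ} {C : ℝ} {n : ℕ}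

theorem integral_sub_sum_div (P : Measure X) (f : X → ℝ) (hn : n ≠ 0) (x : Fin n → X) :
    ∫ y, f y ∂P - (∑ j, f (x j)) / n = (∑ j, (∫ y, f y ∂P - f (x j))) / n := by
  rw [Finset.sum_sub_distrib, sub_div]
  simp [hn]

theorem abs_integral_sub_sum_div_le (P : Measure X) [IsProbabilityMeasure P] {f : X → ℝ}
    (hC : ∀ x, |f x| ≤ C) (x : Fin n → X) : |∫ y, f y ∂P - (∑ j, f (x j)) / n| ≤ C + C := by
  refine (abs_sub _ _).trans (add_le_add (abs_integral_le_of_abs_le_s14 hC) ?_)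
  rcases n.eq_zero_or_pos with rfl | hn
  · simpa using (abs_nonneg _).trans (abs_integral_le_of_abs_le_s14 (μ := P) hC)
  · rw [abs_div, Nat.abs_cast, div_le_iff₀' (by positivity)]
    simpa using abs_sum_sign_mul_le 1 fun i => hC (x i)

theorem uniformDeviation_update_sub_le [Nonempty T] (P : Measure X) [IsProbabilityMeasure P]
    (hC : ∀ t x, |F t x| ≤ C) (x : Fin n → X) (i : Fin n) (y : X) :
    |uniformDeviation P F (update x i y) - uniformDeviation P F x| ≤ (C + C) / n := by
  have hmem (x : Fin n → X) : Memℓp (fun t => |∫ y, F t y ∂P - (∑ j, F t (x j)) / n|) ∞ :=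
    memℓp_infty ⟨C + C, Set.forall_mem_range.2 fun t => by
      simpa using abs_integral_sub_sum_div_le P (hC t) x⟩
  refine abs_ciSup_sub_ciSup_le (hmem _) (hmem _) fun t => ?_
  calc _ ≤ _ := abs_abs_sub_abs_le _ _
    _ = |F t (x i) - F t y| / n := by
      rw [sub_sub_sub_cancel_left, ← sub_div, ← Finset.sum_sub_distrib, abs_div, Nat.abs_cast,
        Finset.sum_eq_single i]
      · simp
      · intro j _ hj
        simp [hj]
      · simp
    _ ≤ (C + C) / n := by
      gcongr
      exact (abs_sub _ _).trans (add_le_add (hC t _) (hC t _))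

theorem uniformDeviation_le_add_div (P : Measure X) [IsProbabilityMeasure P]
    (hC : ∀ t x, |F t x| ≤ C) {t₀ : T} (h₀ : F t₀ = 0) (hn : n ≠ 0) (x : Fin n → X) :
    uniformDeviation P F x ≤ ((⨆ t, ∑ i, (∫ y, F t y ∂P - F t (x i))) +
      ⨆ t, ∑ i, (∫ y, (-F) t y ∂P - (-F) t (x i))) / n := by
  set D : T → ℝ := fun t => ∑ i, (∫ y, F t y ∂P - F t (x i))
  have hD : Memℓp D ∞ := memℓp_infty ⟨n * (C + C), Set.forall_mem_range.2 fun t => by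
    simpa [D] using abs_sum_sign_mul_le 1 fun i =>
      (abs_sub _ _).trans (add_le_add (abs_integral_le_of_abs_le_s14 (μ := P) (hC t)) (hC t (x i)))⟩
  have hD₀ : D t₀ = 0 := by simp [D, h₀]
  have hD_neg (t : T) : ∑ i, (∫ y, (-F) t y ∂P - (-F) t (x i)) = -D t := by
    simp [D, integral_neg, ← sub_eq_neg_add]
  calc uniformDeviation P F x = (⨆ t, |D t|) / n := by
        simp_rw [uniformDeviation, integral_sub_sum_div P _ hn, abs_div, Nat.abs_cast,
          div_eq_mul_inv]
        exact (Real.iSup_mul_of_nonneg (by positivity) _).symm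
    _ ≤ _ := by
        simp_rw [hD_neg]
        gcongr
        exact ciSup_abs_le_add hD hD₀

variable [TopologicalSpace X] [SecondCountableTopology X] [BorelSpace X]

theorem measurable_uniformDeviation (P : Measure X) [IsProbabilityMeasure P]
    (hF : ∀ t, Continuous (F t)) (hC : ∀ t x, |F t x| ≤ C) :
    Measurable (uniformDeviation P F : (Fin n → X) → ℝ) :=
  measurable_ciSup_of_continuous (by fun_prop) fun x =>
    ⟨C + C, Set.forall_mem_range.2 fun t => abs_integral_sub_sum_div_le P (hC t) x⟩

theorem integrable_uniformDeviation [Nonempty T] (P : Measure X) [IsProbabilityMeasure P]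
    (hF : ∀ t, Continuous (F t)) (hC : ∀ t x, |F t x| ≤ C) :
    Integrable (uniformDeviation P F : (Fin n → X) → ℝ) (Measure.pi fun _ => P) :=
  integrable_ciSup_of_continuous (by fun_prop) fun t x => by
    simpa using abs_integral_sub_sum_div_le P (hC t) x

theorem hasSubgaussianMGF_uniformDeviation_sub_integral [Nonempty T] (P : Measure X)
    [IsProbabilityMeasure P] {C : ℝ≥0} (hF : ∀ t, Continuous (F t)) (hC : ∀ t x, |F t x| ≤ C) :
    HasSubgaussianMGF (fun x : Fin n → X => uniformDeviation P F x -
      ∫ z, uniformDeviation P F z ∂(Measure.pi fun _ : Fin n => P)) (C ^ 2 / n)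
      (Measure.pi fun _ => P) := by
  convert hasSubgaussianMGF_pi_of_abs_update_sub_le (fun _ : Fin n => P)
    (measurable_uniformDeviation P hF hC) (c := fun _ => (C + C) / n) fun x i y => by
      simpa using uniformDeviation_update_sub_le P hC x i y
  rcases eq_or_ne (n : ℝ≥0) 0 with hn | hn
  · simp [hn]
  · have hhalf : (C + C) / n / 2 = C / n := by
      rw [div_right_comm, ← two_mul, mul_div_cancel_left₀ _ two_ne_zero]
    rw [hhalf, Finset.sum_const, Finset.card_univ, Fintype.card_fin, nsmul_eq_mul]
    field_simp

theorem integral_uniformDeviation_le_rademacher (P : Measure X) [IsProbabilityMeasure P]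
    (hF : ∀ t, Continuous (F t)) (hC : ∀ t x, |F t x| ≤ C) {t₀ : T} (h₀ : F t₀ = 0) (hn : n ≠ 0) :
    ∫ x, uniformDeviation P F x ∂(Measure.pi fun _ : Fin n => P) ≤
      4 / n * ∫ x, rademacher (fun t i => F t (x i)) ∂(Measure.pi fun _ : Fin n => P) := by
  have : Nonempty T := ⟨t₀⟩
  set μ := Measure.pi fun _ : Fin n => P
  set S : (T → X → ℝ) → (Fin n → X) → ℝ := fun G x => ⨆ t, ∑ i, (∫ y, G t y ∂P - G t (x i))
  have hF_neg (t : T) : Continuous ((-F) t) := (hF t).neg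
  have hC_neg (t : T) (x : X) : |(-F) t x| ≤ C := by simpa using hC t x
  have hS : Integrable (S F) μ := integrable_ciSup_sum_integral_sub P hF hC
  have hS_neg : Integrable (S (-F)) μ := integrable_ciSup_sum_integral_sub P hF_neg hC_neg
  have hneg := integral_ciSup_sum_integral_sub_le_rademacher (ι := Fin n) P hF_neg hC_neg
  simp only [Pi.neg_apply, rademacher_neg] at hneg
  calc ∫ x, uniformDeviation P F x ∂μ ≤ ∫ x, (S F x + S (-F) x) / n ∂μ :=
        integral_mono (integrable_uniformDeviation P hF hC) ((hS.add hS_neg).div_const _)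
          (uniformDeviation_le_add_div P hC h₀ hn)
    _ = (∫ x, S F x ∂μ + ∫ x, S (-F) x ∂μ) / n := by
        rw [integral_div, integral_add hS hS_neg]
    _ ≤ (2 * ∫ x, rademacher (fun t i => F t (x i)) ∂μ +
          2 * ∫ x, rademacher (fun t i => F t (x i)) ∂μ) / n := by
        gcongr
        · exact integral_ciSup_sum_integral_sub_le_rademacher P hF hC
        · exact hneg
    _ = 4 / n * ∫ x, rademacher (fun t i => F t (x i)) ∂μ := by ring

theorem integral_uniformDeviation_le_of_rademacher_le (P : Measure X) [IsProbabilityMeasure P]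
    (hF : ∀ t, Continuous (F t)) (hC : ∀ t x, |F t x| ≤ C) {t₀ : T} (h₀ : F t₀ = 0) (hn : n ≠ 0)
    {R : ℝ} (hR : ∀ x : Fin n → X, rademacher (fun t i => F t (x i)) ≤ R) :
    ∫ x, uniformDeviation P F x ∂(Measure.pi fun _ : Fin n => P) ≤ 4 / n * R := by
  have : Nonempty T := ⟨t₀⟩
  refine (integral_uniformDeviation_le_rademacher P hF hC h₀ hn).trans ?_
  gcongr
  simpa using integral_mono (integrable_rademacher P hF hC) (integrable_const R) hR

end UniformDeviation

section LinearClass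

variable {ι κ T E : Type*} [NormedAddCommGroup E]

/-- The lift `x ↦ (x, M)` for which every difference `‖x - a‖² - ‖x - b‖²` becomes linear, by way
of `inner_quadLift_quadDiff`. The weight `M` of the added coordinate balances the two parts of
`quadDiff` on the ball of radius `M`. -/
def quadLift (M : ℝ) (x : E) : WithLp 2 (E × ℝ) := WithLp.toLp 2 (x, M)

theorem norm_quadLift_sq_le {M : ℝ} {x : E} (hx : ‖x‖ ≤ M) : ‖quadLift M x‖ ^ 2 ≤ 2 * M ^ 2 := by
  calc ‖quadLift M x‖ ^ 2 = ‖x‖ ^ 2 + ‖M‖ ^ 2 := WithLp.prod_norm_sq_eq_of_L2 _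
    _ ≤ M ^ 2 + M ^ 2 := by
        rw [Real.norm_eq_abs, sq_abs]
        gcongr
    _ = 2 * M ^ 2 := (two_mul _).symm

theorem abs_norm_sq_sub_norm_sq_le {M : ℝ} {a b : E} (ha : ‖a‖ ≤ M) (hb : ‖b‖ ≤ M) :
    |‖a‖ ^ 2 - ‖b‖ ^ 2| ≤ 2 * M * ‖a - b‖ := by
  calc |‖a‖ ^ 2 - ‖b‖ ^ 2| = (‖a‖ + ‖b‖) * |‖a‖ - ‖b‖| := by
        rw [sq_sub_sq, abs_mul, abs_of_nonneg (by positivity)]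
    _ ≤ 2 * M * ‖a - b‖ :=
        mul_le_mul (by linarith) (abs_norm_sub_norm_le a b) (abs_nonneg _)
          (by linarith [norm_nonneg a])

variable [InnerProductSpace ℝ E]

/-- The vector representing `x ↦ ‖x - a‖² - ‖x - b‖²` after the lift `quadLift M`. -/
def quadDiff (M : ℝ) (a b : E) : WithLp 2 (E × ℝ) :=
  WithLp.toLp 2 ((-2 : ℝ) • (a - b), (‖a‖ ^ 2 - ‖b‖ ^ 2) / M)

theorem inner_quadLift_quadDiff {M : ℝ} (hM : M ≠ 0) (x a b : E) :
    inner ℝ (quadLift M x) (quadDiff M a b) = ‖x - a‖ ^ 2 - ‖x - b‖ ^ 2 := by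
  rw [norm_sub_sq_real, norm_sub_sq_real]
  calc inner ℝ (quadLift M x) (quadDiff M a b)
      = inner ℝ x ((-2 : ℝ) • (a - b)) + (‖a‖ ^ 2 - ‖b‖ ^ 2) / M * M := rfl
    _ = _ := by
        rw [inner_smul_right, inner_sub_right, div_mul_cancel₀ _ hM]
        ring

theorem norm_quadDiff_sq_le {M : ℝ} (hM : 0 < M) {a b : E} (ha : ‖a‖ ≤ M) (hb : ‖b‖ ≤ M) :
    ‖quadDiff M a b‖ ^ 2 ≤ 8 * ‖a - b‖ ^ 2 := by
  have habs : |(‖a‖ ^ 2 - ‖b‖ ^ 2) / M| ≤ 2 * ‖a - b‖ := by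
    rw [abs_div, abs_of_pos hM, div_le_iff₀ hM]
    linarith [abs_norm_sq_sub_norm_sq_le ha hb]
  calc ‖quadDiff M a b‖ ^ 2
      = ‖(-2 : ℝ) • (a - b)‖ ^ 2 + |(‖a‖ ^ 2 - ‖b‖ ^ 2) / M| ^ 2 :=
        WithLp.prod_norm_sq_eq_of_L2 _
    _ ≤ ‖(-2 : ℝ) • (a - b)‖ ^ 2 + (2 * ‖a - b‖) ^ 2 := by gcongr
    _ = 8 * ‖a - b‖ ^ 2 := by
        rw [norm_smul, Real.norm_eq_abs, abs_neg, abs_two]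
        ring

variable [Fintype ι] [DecidableEq ι] [Fintype κ] [DecidableEq κ] [Nonempty T]

theorem rademacher_inner_prod_le (w : ι → E) {g : T → κ → E} {ρ : ℝ}
    (hg : ∀ t, ∑ j, ‖g t j‖ ^ 2 ≤ ρ) :
    rademacher (fun t (p : ι × κ) => inner ℝ (w p.1) (g t p.2)) ≤
      √(ρ * (Fintype.card κ * ∑ i, ‖w i‖ ^ 2)) := by
  have hnorm (t : T) : ‖WithLp.toLp 2 (g t)‖ ≤ √ρ := by
    refine Real.le_sqrt_of_sq_le ?_
    rw [PiLp.norm_sq_eq_of_L2]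
    exact hg t
  have hinner (t : T) (i : ι) (j : κ) :
      inner ℝ (PiLp.single 2 j (w i)) (WithLp.toLp 2 (g t)) = inner ℝ (w i) (g t j) := by
    rw [PiLp.inner_apply, Finset.sum_eq_single j] <;> simp +contextual
  have h := rademacher_inner_le (fun p : ι × κ => PiLp.single 2 p.2 (w p.1)) hnorm
  rw [← Real.sqrt_mul' _ (by positivity)] at h
  simpa [hinner, Fintype.sum_prod_type, Finset.mul_sum] using h

theorem rademacher_norm_sub_sq_sub_norm_sub_sq_le {M δ : ℝ} (hM : 0 < M) {x : ι → E}
    (hx : ∀ i, ‖x i‖ ≤ M) {a b : T → κ → E} (ha : ∀ t j, ‖a t j‖ ≤ M) (hb : ∀ t j, ‖b t j‖ ≤ M)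
    (hab : ∀ t, 16 * M ^ 2 * ∑ j, ‖a t j - b t j‖ ^ 2 ≤ δ) :
    rademacher (fun t (p : ι × κ) => ‖x p.1 - a t p.2‖ ^ 2 - ‖x p.1 - b t p.2‖ ^ 2) ≤
      √(δ * (Fintype.card κ * Fintype.card ι)) := by
  have hw : ∑ i, ‖quadLift M (x i)‖ ^ 2 ≤ Fintype.card ι * (2 * M ^ 2) := by
    rw [← nsmul_eq_mul]
    exact Finset.sum_le_card_nsmul _ _ _ fun i _ => norm_quadLift_sq_le (hx i)
  have hg (t : T) : ∑ j, ‖quadDiff M (a t j) (b t j)‖ ^ 2 ≤ δ / (2 * M ^ 2) := by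
    rw [le_div_iff₀ (by positivity)]
    calc (∑ j, ‖quadDiff M (a t j) (b t j)‖ ^ 2) * (2 * M ^ 2)
        ≤ (∑ j, 8 * ‖a t j - b t j‖ ^ 2) * (2 * M ^ 2) := by
          gcongr with j
          exact norm_quadDiff_sq_le hM (ha t j) (hb t j)
      _ = 16 * M ^ 2 * ∑ j, ‖a t j - b t j‖ ^ 2 := by
          rw [← Finset.mul_sum]
          ring
      _ ≤ δ := hab t
  have hδ : 0 ≤ δ := le_trans (by positivity) (hab (Classical.arbitrary T))
  simp_rw [← inner_quadLift_quadDiff hM.ne']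
  calc _ ≤ √(δ / (2 * M ^ 2) * (Fintype.card κ * ∑ i, ‖quadLift M (x i)‖ ^ 2)) :=
        rademacher_inner_prod_le _ hg
    _ ≤ √(δ / (2 * M ^ 2) * (Fintype.card κ * (Fintype.card ι * (2 * M ^ 2)))) := by gcongr
    _ = √(δ * (Fintype.card κ * Fintype.card ι)) := by
        congr 1
        field_simp

end LinearClass

section BallProj

variable {E : Type*} [NormedAddCommGroup E] [NormedSpace ℝ E] {M : ℝ}

/-- The radial retraction of `E` onto the closed ball of radius `M`. -/
def ballProj (M : ℝ) (x : E) : E := (M / max M ‖x‖) • x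

theorem continuous_ballProj (hM : 0 < M) : Continuous (ballProj M : E → E) :=
  (continuous_const.div (by fun_prop) fun _ => (lt_max_of_lt_left hM).ne').smul continuous_id

theorem norm_ballProj_le (hM : 0 < M) (x : E) : ‖ballProj M x‖ ≤ M := by
  have hmax : 0 < max M ‖x‖ := lt_max_of_lt_left hM
  rw [ballProj, norm_smul, Real.norm_of_nonneg (by positivity), div_mul_eq_mul_div,
    div_le_iff₀ hmax]
  gcongr
  exact le_max_right _ _

theorem ballProj_of_norm_le (hM : 0 < M) {x : E} (hx : ‖x‖ ≤ M) : ballProj M x = x := by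
  rw [ballProj, max_eq_left hx, div_self hM.ne', one_smul]

theorem norm_sub_ballProj_sq_lt {E : Type*} [NormedAddCommGroup E] [InnerProductSpace ℝ E]
    (hM : 0 < M) {x c : E} (hx : ‖x‖ ≤ M) (hc : M < ‖c‖) :
    ‖x - ballProj M c‖ ^ 2 < ‖x - c‖ ^ 2 := by
  rw [ballProj, max_eq_right hc.le]
  set s := M / ‖c‖
  have hc₀ : 0 < ‖c‖ := hM.trans hc
  have hsc : s * ‖c‖ = M := div_mul_cancel₀ M hc₀.ne'
  have hs : 0 < 1 - s := sub_pos.2 ((div_lt_one hc₀).2 hc)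
  have hinner : inner ℝ x c ≤ s * ‖c‖ ^ 2 := by
    calc inner ℝ x c ≤ ‖x‖ * ‖c‖ := real_inner_le_norm x c
      _ ≤ M * ‖c‖ := by gcongr
      _ = s * ‖c‖ ^ 2 := by rw [← hsc]; ring
  have hangle : 0 ≤ inner ℝ (x - s • c) (s • c - c) := by
    calc 0 ≤ (1 - s) * (s * ‖c‖ ^ 2 - inner ℝ x c) := mul_nonneg hs.le (sub_nonneg.2 hinner)
      _ = inner ℝ (x - s • c) (s • c - c) := by
        simp only [inner_sub_left, inner_sub_right, real_inner_smul_left, real_inner_smul_right,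
          real_inner_self_eq_norm_sq, norm_smul, mul_pow, Real.norm_eq_abs, sq_abs]
        ring
  have hne : s • c - c ≠ 0 := by
    refine sub_ne_zero.2 fun h => hs.ne' (sub_eq_zero.2 ?_)
    exact (smul_left_injective ℝ (norm_pos_iff.1 hc₀) (by simpa using h)).symm
  have hdist : 0 < ‖s • c - c‖ ^ 2 := by positivity
  calc ‖x - s • c‖ ^ 2
      < ‖x - s • c‖ ^ 2 + 2 * inner ℝ (x - s • c) (s • c - c) + ‖s • c - c‖ ^ 2 := by linarith
    _ = ‖x - c‖ ^ 2 := by rw [← norm_add_sq_real, sub_add_sub_cancel]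

end BallProj

section Support

variable {E : Type*} [NormedAddCommGroup E] [MeasurableSpace E] {P : Measure E}

theorem ae_norm_le_of_mbounded {M : ℝ} (hP : mbounded P M) : ∀ᵐ x ∂P, ‖x‖ ≤ M := by
  filter_upwards [measure_eq_zero_iff_ae_notMem.1 hP] with x hx
  simpa using hx

theorem ae_pi_norm_le_of_mbounded {ι : Type*} [Fintype ι] [SigmaFinite P] {M : ℝ}
    (hP : mbounded P M) : ∀ᵐ x ∂(Measure.pi fun _ : ι => P), ∀ i, ‖x i‖ ≤ M :=
  ae_all_iff.2 fun i => (Measure.quasiMeasurePreserving_eval _ i).ae (ae_norm_le_of_mbounded hP)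

theorem exists_notMem_range_forall_mem_nhds_pos [SecondCountableTopology E] {k : ℕ}
    (hsupp : suppGT P k) (c : Fin k → E) :
    ∃ y ∉ Set.range c, ∀ U ∈ nhds y, 0 < P U := by
  classical
  have hpos := hsupp (Finset.univ.image c) (Finset.card_image_le.trans_eq (by simp))
  obtain ⟨y, hy, hyU⟩ := exists_mem_forall_mem_nhdsWithin_pos_measure hpos
  exact ⟨y, by simpa using hy, fun U hU => hyU U (mem_nhdsWithin_of_mem_nhds hU)⟩

end Support

section Distortion

variable {E : Type*} [NormedAddCommGroup E] {k : ℕ}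

theorem qgamma_le (c : Fin k → E) (x : E) (j : Fin k) : qgamma k c x ≤ ‖x - c j‖ ^ 2 :=
  ciInf_le (Set.finite_range _).bddBelow j

theorem qgamma_nonneg (c : Fin k → E) (x : E) : 0 ≤ qgamma k c x :=
  Real.iInf_nonneg fun _ => by positivity

theorem qgamma_congr_range {c d : Fin k → E} (h : Set.range c = Set.range d) :
    qgamma k c = qgamma k d := by
  have hrange (c : Fin k → E) (x : E) :
      qgamma k c x = sInf ((fun y => ‖x - y‖ ^ 2) '' Set.range c) := by
    rw [← Set.range_comp]
    rfl
  ext x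
  rw [hrange, hrange, h]

theorem qgamma_update_le (c : Fin k → E) {x y : E} {i j : Fin k} (hj : j ≠ i)
    (h : ‖x - c j‖ ^ 2 ≤ qgamma k c x) : qgamma k (update c i y) x ≤ qgamma k c x := by
  simpa [hj] using (qgamma_le (update c i y) x j).trans (by simpa [hj] using h)

variable [NeZero k]

theorem exists_qgamma_eq (c : Fin k → E) (x : E) : ∃ j, qgamma k c x = ‖x - c j‖ ^ 2 := by
  obtain ⟨j, hj⟩ := exists_eq_ciInf_of_finite (f := fun j => ‖x - c j‖ ^ 2)
  exact ⟨j, hj.symm⟩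

theorem continuous_qgamma (c : Fin k → E) : Continuous (qgamma k c) := by
  have h : qgamma k c = fun x => Finset.univ.inf' Finset.univ_nonempty fun j => ‖x - c j‖ ^ 2 :=
    funext fun x => (Finset.inf'_univ_eq_ciInf _).symm
  rw [h]
  exact Continuous.finset_inf'_apply _ fun j _ => by fun_prop

theorem exists_abs_qgamma_sub_qgamma_le (c d : Fin k → E) (x : E) :
    ∃ j, |qgamma k c x - qgamma k d x| ≤ |‖x - c j‖ ^ 2 - ‖x - d j‖ ^ 2| := by
  wlog h : qgamma k d x ≤ qgamma k c x generalizing c d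
  · simpa only [abs_sub_comm] using this d c (le_of_not_ge h)
  obtain ⟨j, hj⟩ := exists_qgamma_eq d x
  refine ⟨j, ?_⟩
  rw [abs_of_nonneg (sub_nonneg.2 h), hj]
  exact (sub_le_sub_right (qgamma_le c x j) _).trans (le_abs_self _)

variable [MeasurableSpace E] [BorelSpace E] {P : Measure E} [IsFiniteMeasure P] {M : ℝ}

theorem integrable_qgamma (hP : mbounded P M) (c : Fin k → E) :
    Integrable (qgamma k c) P := by
  refine Integrable.of_bound (continuous_qgamma c).measurable.aestronglyMeasurable
    ((M + ‖c 0‖) ^ 2) ?_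
  filter_upwards [ae_norm_le_of_mbounded hP] with x hx
  calc ‖qgamma k c x‖ = qgamma k c x := Real.norm_of_nonneg (qgamma_nonneg c x)
    _ ≤ ‖x - c 0‖ ^ 2 := qgamma_le c x 0
    _ ≤ (M + ‖c 0‖) ^ 2 := by
      gcongr
      exact (norm_sub_le _ _).trans (by gcongr)

theorem qgamma_ae_eq_of_ae_le (hP : mbounded P M) {c d : Fin k → E} (hc : c ∈ qopt k P)
    (hdc : qgamma k d ≤ᵐ[P] qgamma k c) : qgamma k d =ᵐ[P] qgamma k c :=
  (integral_eq_iff_of_ae_le (integrable_qgamma hP d) (integrable_qgamma hP c) hdc).1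
    (le_antisymm (integral_mono_ae (integrable_qgamma hP d) (integrable_qgamma hP c) hdc) (hc d))

variable [SecondCountableTopology E]

-- If `c i` were never needed, moving it to a support point off the codebook would lower the risk.
theorem not_ae_exists_ne_norm_sub_sq_le_qgamma (hP : mbounded P M) (hsupp : suppGT P k)
    {c : Fin k → E} (hc : c ∈ qopt k P) (i : Fin k) :
    ¬∀ᵐ x ∂P, ∃ j ≠ i, ‖x - c j‖ ^ 2 ≤ qgamma k c x := by
  intro h
  obtain ⟨y, hyc, hyU⟩ := exists_notMem_range_forall_mem_nhds_pos hsupp c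
  have hae : qgamma k (update c i y) =ᵐ[P] qgamma k c := by
    refine qgamma_ae_eq_of_ae_le hP hc ?_
    filter_upwards [h] with x ⟨j, hj, hx⟩ using qgamma_update_le c hj hx
  have hopen : IsOpen {x | ‖x - y‖ ^ 2 < qgamma k c x} :=
    isOpen_lt (by fun_prop) (continuous_qgamma c)
  have hmem : ‖y - y‖ ^ 2 < qgamma k c y := by
    obtain ⟨j, hj⟩ := exists_qgamma_eq c y
    have : y - c j ≠ 0 := sub_ne_zero.2 fun h => hyc ⟨j, h.symm⟩
    calc ‖y - y‖ ^ 2 = 0 := by simp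
      _ < ‖y - c j‖ ^ 2 := by positivity
      _ = qgamma k c y := hj.symm
  refine (hyU _ (hopen.mem_nhds hmem)).ne' (measure_mono_null (fun x hx => ?_) hae)
  have hxi : qgamma k (update c i y) x ≤ ‖x - y‖ ^ 2 := by
    simpa using qgamma_le (update c i y) x i
  exact (hxi.trans_lt hx).ne

theorem injective_of_mem_qopt (hP : mbounded P M) (hsupp : suppGT P k) {c : Fin k → E}
    (hc : c ∈ qopt k P) : Injective c := by
  intro i j hij
  by_contra hne
  refine not_ae_exists_ne_norm_sub_sq_le_qgamma hP hsupp hc i (.of_forall fun x => ?_)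
  obtain ⟨l, hl⟩ := exists_qgamma_eq c x
  rcases eq_or_ne l i with rfl | hli
  · exact ⟨j, Ne.symm hne, by rw [hl, hij]⟩
  · exact ⟨l, hli, hl.ge⟩

theorem norm_le_of_mem_qopt [InnerProductSpace ℝ E] (hM : 0 < M) (hP : mbounded P M)
    (hsupp : suppGT P k) {c : Fin k → E} (hc : c ∈ qopt k P) (i : Fin k) : ‖c i‖ ≤ M := by
  by_contra! hi
  let d := update c i (ballProj M (c i))
  have hdi {x : E} (hx : ‖x‖ ≤ M) : qgamma k d x < ‖x - c i‖ ^ 2 := by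
    refine lt_of_le_of_lt ?_ (norm_sub_ballProj_sq_lt hM hx hi)
    simpa [d] using qgamma_le d x i
  have hae : qgamma k d =ᵐ[P] qgamma k c := by
    refine qgamma_ae_eq_of_ae_le hP hc ?_
    filter_upwards [ae_norm_le_of_mbounded hP] with x hx
    obtain ⟨l, hl⟩ := exists_qgamma_eq c x
    rcases eq_or_ne l i with rfl | hli
    · exact hl ▸ (hdi hx).le
    · exact qgamma_update_le c hli hl.ge
  refine not_ae_exists_ne_norm_sub_sq_le_qgamma hP hsupp hc i ?_
  filter_upwards [ae_norm_le_of_mbounded hP, hae] with x hx hdc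
  obtain ⟨l, hl⟩ := exists_qgamma_eq c x
  refine ⟨l, ?_, hl.ge⟩
  rintro rfl
  exact (hdi hx).ne (hdc.trans hl)

end Distortion

section LocalizedClass

variable {E : Type*} [NormedAddCommGroup E] {k : ℕ} {M δ : ℝ} {cs : Fin k → E}

/-- The codebooks `c` with code points in the ball of radius `M` for which the localization
functional `16 M² ‖c - cs‖²` is at most `δ`. -/
def localCodebooks (M δ : ℝ) (cs : Fin k → E) : Set (Fin k → E) :=
  {c | (∀ i, ‖c i‖ ≤ M) ∧ 16 * M ^ 2 * ∑ i, ‖c i - cs i‖ ^ 2 ≤ δ}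

theorem self_mem_localCodebooks (hcs : ∀ i, ‖cs i‖ ≤ M) (hδ : 0 ≤ δ) : cs ∈ localCodebooks M δ cs :=
  ⟨hcs, by simpa using hδ⟩

theorem abs_norm_sub_sq_sub_norm_sub_sq_le_sqrt (hcs : ∀ i, ‖cs i‖ ≤ M) {c : Fin k → E}
    (hc : c ∈ localCodebooks M δ cs) {x : E} (hx : ‖x‖ ≤ M) (i : Fin k) :
    |‖x - c i‖ ^ 2 - ‖x - cs i‖ ^ 2| ≤ √δ := by
  have hball {y : E} (hy : ‖y‖ ≤ M) : ‖x - y‖ ≤ M + M :=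
    (norm_sub_le x y).trans (add_le_add hx hy)
  have hi : ‖c i - cs i‖ ^ 2 ≤ ∑ i, ‖c i - cs i‖ ^ 2 :=
    Finset.single_le_sum (f := fun i => ‖c i - cs i‖ ^ 2) (fun _ _ => by positivity)
      (Finset.mem_univ i)
  calc |‖x - c i‖ ^ 2 - ‖x - cs i‖ ^ 2|
      ≤ 2 * (M + M) * ‖x - c i - (x - cs i)‖ :=
        abs_norm_sq_sub_norm_sq_le (hball (hc.1 i)) (hball (hcs i))
    _ = 4 * M * ‖c i - cs i‖ := by
        rw [sub_sub_sub_cancel_left, norm_sub_rev]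
        ring
    _ ≤ √δ := by
        refine Real.le_sqrt_of_sq_le ?_
        calc (4 * M * ‖c i - cs i‖) ^ 2 = 16 * M ^ 2 * ‖c i - cs i‖ ^ 2 := by ring
          _ ≤ 16 * M ^ 2 * ∑ i, ‖c i - cs i‖ ^ 2 := by gcongr
          _ ≤ δ := hc.2

theorem exists_perm_comp_eq_of_range_eq {ι α : Type*} [Finite ι] {c d : ι → α} (hd : Injective d)
    (h : Set.range c = Set.range d) : ∃ τ : Equiv.Perm ι, c ∘ τ = d := by
  have hmem (i : ι) : ∃ j, c j = d i := by
    rw [← Set.mem_range, h]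
    exact Set.mem_range_self i
  choose τ hτ using hmem
  have hinj : Injective τ := fun i j hij => hd (by rw [← hτ, ← hτ, hij])
  exact ⟨Equiv.ofBijective τ (Finite.injective_iff_bijective.1 hinj), funext hτ⟩

theorem exists_mem_localCodebooks_qgamma_eq {cs' : Fin k → E} (hcs' : Injective cs')
    (h : Set.range cs = Set.range cs') {c : Fin k → E} (hc : c ∈ localCodebooks M δ cs) :
    ∃ d ∈ localCodebooks M δ cs', qgamma k d = qgamma k c := by
  obtain ⟨τ, rfl⟩ := exists_perm_comp_eq_of_range_eq hcs' h
  refine ⟨c ∘ τ, ⟨fun i => hc.1 (τ i), ?_⟩, qgamma_congr_range (τ.surjective.range_comp c)⟩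
  exact (congrArg _ (Equiv.sum_comp τ fun i => ‖c i - cs i‖ ^ 2)).trans_le hc.2

/-- The excess loss `γ(c, ·) - γ(cs, ·)`, evaluated at the projection of the argument onto the ball
of radius `M`. This changes nothing on the ball, and makes the loss bounded on the whole space. -/
def excessLoss [NormedSpace ℝ E] (M : ℝ) (cs c : Fin k → E) (x : E) : ℝ :=
  qgamma k c (ballProj M x) - qgamma k cs (ballProj M x)

section NormedSpace

variable [NormedSpace ℝ E]

theorem excessLoss_self : excessLoss M cs cs = 0 := funext fun _ => sub_self _

theorem excessLoss_of_norm_le (hM : 0 < M) {x : E} (hx : ‖x‖ ≤ M) (c : Fin k → E) :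
    excessLoss M cs c x = qgamma k c x - qgamma k cs x := by
  rw [excessLoss, ballProj_of_norm_le hM hx]

variable [NeZero k]

theorem continuous_excessLoss (hM : 0 < M) (c : Fin k → E) : Continuous (excessLoss M cs c) :=
  ((continuous_qgamma c).comp (continuous_ballProj hM)).sub
    ((continuous_qgamma cs).comp (continuous_ballProj hM))

theorem abs_excessLoss_le (hM : 0 < M) (hcs : ∀ i, ‖cs i‖ ≤ M) {c : Fin k → E}
    (hc : c ∈ localCodebooks M δ cs) (x : E) : |excessLoss M cs c x| ≤ √δ := by
  obtain ⟨j, hj⟩ := exists_abs_qgamma_sub_qgamma_le c cs (ballProj M x)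
  exact hj.trans (abs_norm_sub_sq_sub_norm_sub_sq_le_sqrt hcs hc (norm_ballProj_le hM x) j)

end NormedSpace

variable [InnerProductSpace ℝ E] [NeZero k] {n : ℕ}

theorem rademacher_excessLoss_le (hM : 0 < M) (hcs : ∀ i, ‖cs i‖ ≤ M) (hδ : 0 ≤ δ)
    (x : Fin n → E) :
    rademacher (fun (c : localCodebooks M δ cs) i => excessLoss M cs c (x i)) ≤
      √(δ * (k * n)) := by
  have : Nonempty (localCodebooks M δ cs) := ⟨⟨cs, self_mem_localCodebooks hcs hδ⟩⟩
  let u (c : localCodebooks M δ cs) (i : Fin n) (j : Fin k) : ℝ :=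
    ‖ballProj M (x i) - c.1 j‖ ^ 2 - ‖ballProj M (x i) - cs j‖ ^ 2
  calc rademacher (fun (c : localCodebooks M δ cs) i => excessLoss M cs c (x i))
      ≤ rademacher fun c (p : Fin n × Fin k) => u c p.1 p.2 := by
        refine rademacher_le_of_forall_exists_abs_sub_le
          (fun i => memℓp_infty ⟨√δ, Set.forall_mem_range.2 fun c =>
            abs_excessLoss_le hM hcs c.2 _⟩)
          (fun i j => memℓp_infty ⟨√δ, Set.forall_mem_range.2 fun c =>
            abs_norm_sub_sq_sub_norm_sub_sq_le_sqrt hcs c.2 (norm_ballProj_le hM _) j⟩)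
          fun i c d => ?_
        simpa only [u, excessLoss, sub_sub_sub_cancel_right] using
          exists_abs_qgamma_sub_qgamma_le c.1 d.1 (ballProj M (x i))
    _ ≤ √(δ * (Fintype.card (Fin k) * Fintype.card (Fin n))) :=
        rademacher_norm_sub_sq_sub_norm_sub_sq_le hM (fun i => norm_ballProj_le hM _)
          (fun c => c.2.1) (fun _ => hcs) fun c => c.2.2
    _ = √(δ * (k * n)) := by simp only [Fintype.card_fin]

variable [MeasurableSpace E]

/-- The uniform deviation over the excess losses with respect to `cs` of the codebooks localized at
`cs`. -/
def localDeviation (P : Measure E) (M δ : ℝ) (cs : Fin k → E) (x : Fin n → E) : ℝ :=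
  uniformDeviation P (fun c : localCodebooks M δ cs => excessLoss M cs c) x

theorem abs_integral_sub_sum_div_le_localDeviation {P : Measure E} [IsProbabilityMeasure P]
    (hM : 0 < M) (hP : mbounded P M) (hcs : ∀ i, ‖cs i‖ ≤ M) {c : Fin k → E}
    (hc : c ∈ localCodebooks M δ cs) {x : Fin n → E} (hx : ∀ j, ‖x j‖ ≤ M) :
    |∫ y, (qgamma k c y - qgamma k cs y) ∂P - (∑ j, (qgamma k c (x j) - qgamma k cs (x j))) / n| ≤
      localDeviation P M δ cs x := by
  have hint : ∫ y, (qgamma k c y - qgamma k cs y) ∂P = ∫ y, excessLoss M cs c y ∂P := by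
    refine integral_congr_ae ?_
    filter_upwards [ae_norm_le_of_mbounded hP] with y hy using
      (excessLoss_of_norm_le hM hy c).symm
  have hbdd : BddAbove (Set.range fun d : localCodebooks M δ cs =>
      |∫ y, excessLoss M cs d y ∂P - (∑ j, excessLoss M cs d (x j)) / n|) :=
    ⟨√δ + √δ, Set.forall_mem_range.2 fun d =>
      abs_integral_sub_sum_div_le P (abs_excessLoss_le hM hcs d.2) x⟩
  simp only [hint, ← excessLoss_of_norm_le hM (hx _)]
  exact le_ciSup hbdd ⟨c, hc⟩

theorem abs_integral_sub_sum_div_le_localDeviation_of_range_eq {P : Measure E}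
    [IsProbabilityMeasure P] (hM : 0 < M) (hP : mbounded P M) {cs' : Fin k → E}
    (hcs' : ∀ i, ‖cs' i‖ ≤ M) (hinj : Injective cs') (hrange : Set.range cs = Set.range cs')
    {c : Fin k → E} (hc : c ∈ localCodebooks M δ cs) {x : Fin n → E} (hx : ∀ j, ‖x j‖ ≤ M) :
    |∫ y, (qgamma k c y - qgamma k cs y) ∂P - (∑ j, (qgamma k c (x j) - qgamma k cs (x j))) / n| ≤
      localDeviation P M δ cs' x := by
  obtain ⟨d, hd, hdc⟩ := exists_mem_localCodebooks_qgamma_eq hinj hrange hc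
  simpa only [hdc, qgamma_congr_range hrange] using
    abs_integral_sub_sum_div_le_localDeviation hM hP hcs' hd hx

variable [BorelSpace E] [SecondCountableTopology E]

theorem integrable_localDeviation (P : Measure E) [IsProbabilityMeasure P]
    (hM : 0 < M) (hcs : ∀ i, ‖cs i‖ ≤ M) (hδ : 0 ≤ δ) :
    Integrable (localDeviation P M δ cs : (Fin n → E) → ℝ) (Measure.pi fun _ => P) := by
  have : Nonempty (localCodebooks M δ cs) := ⟨⟨cs, self_mem_localCodebooks hcs hδ⟩⟩
  exact integrable_uniformDeviation P (fun c => continuous_excessLoss hM c.1)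
    fun c => abs_excessLoss_le hM hcs c.2

theorem hasSubgaussianMGF_localDeviation_sub_integral (P : Measure E) [IsProbabilityMeasure P]
    (hM : 0 < M) (hcs : ∀ i, ‖cs i‖ ≤ M) {δ : ℝ≥0} :
    HasSubgaussianMGF (fun x : Fin n → E => localDeviation P M δ cs x -
      ∫ z, localDeviation P M δ cs z ∂(Measure.pi fun _ : Fin n => P)) (δ / n)
      (Measure.pi fun _ => P) := by
  have : Nonempty (localCodebooks M δ cs) := ⟨⟨cs, self_mem_localCodebooks hcs δ.2⟩⟩
  have hbound (c : localCodebooks M δ cs) (x : E) : |excessLoss M cs c x| ≤ NNReal.sqrt δ := by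
    simpa using abs_excessLoss_le hM hcs c.2 x
  simpa only [localDeviation, NNReal.sq_sqrt] using
    hasSubgaussianMGF_uniformDeviation_sub_integral P
      (fun c : localCodebooks M δ cs => continuous_excessLoss hM c.1) hbound

theorem integral_localDeviation_le (P : Measure E) [IsProbabilityMeasure P]
    (hM : 0 < M) (hcs : ∀ i, ‖cs i‖ ≤ M) (hδ : 0 ≤ δ) (hn : n ≠ 0) :
    ∫ x : Fin n → E, localDeviation P M δ cs x ∂(Measure.pi fun _ => P) ≤
      4 * √k * (√δ / √n) := by
  let F (c : localCodebooks M δ cs) : E → ℝ := excessLoss M cs c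
  have h₀ : F ⟨cs, self_mem_localCodebooks hcs hδ⟩ = 0 := excessLoss_self
  have hF (c : localCodebooks M δ cs) : Continuous (F c) := continuous_excessLoss hM c.1
  have hbound (c : localCodebooks M δ cs) (x : E) : |F c x| ≤ √δ := abs_excessLoss_le hM hcs c.2 x
  have hR (x : Fin n → E) : rademacher (fun c i => F c (x i)) ≤ √(δ * (k * n)) :=
    rademacher_excessLoss_le hM hcs hδ x
  calc _ ≤ 4 / n * √(δ * (k * n)) :=
        integral_uniformDeviation_le_of_rademacher_le P hF hbound h₀ hn hR
    _ = 4 * √k * (√δ / √n) := by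
        rw [Real.sqrt_mul hδ, Real.sqrt_mul (Nat.cast_nonneg k)]
        field_simp
        rw [Real.sq_sqrt (Nat.cast_nonneg n)]
        ring

theorem integral_sup'_localDeviation_le (P : Measure E) [IsProbabilityMeasure P] (hM : 0 < M)
    (hδ : 0 ≤ δ) (hn : n ≠ 0) {S : Finset (Fin k → E)} (hS : S.Nonempty)
    (hSM : ∀ cs ∈ S, ∀ i, ‖cs i‖ ≤ M) :
    ∫ x : Fin n → E, S.sup' hS (fun cs => localDeviation P M δ cs x) ∂(Measure.pi fun _ => P) ≤
      (4 * √k + √(2 * Real.log S.card)) * √δ / √n := by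
  lift δ to ℝ≥0 using hδ
  calc _ ≤ 4 * √k * (√δ / √n) + √(2 * (δ / n : ℝ≥0) * Real.log S.card) :=
        integral_sup'_le_add_of_hasSubgaussianMGF_sub hS
          (fun cs hcs => hasSubgaussianMGF_localDeviation_sub_integral P hM (hSM cs hcs))
          fun cs hcs => integral_localDeviation_le P hM (hSM cs hcs) δ.2 hn
    _ = 4 * √k * (√δ / √n) + √(2 * Real.log S.card) * (√δ / √n) := by
        rw [NNReal.coe_div, NNReal.coe_natCast, mul_right_comm 2 (δ / n : ℝ),
          Real.sqrt_mul' _ (by positivity), Real.sqrt_div δ.coe_nonneg]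
    _ = (4 * √k + √(2 * Real.log S.card)) * √δ / √n := by ring

end LocalizedClass

theorem stmt14_general [BorelSpace H] [SecondCountableTopology H]
    (k : ℕ) (hk : 0 < k) (P : Measure H) [IsProbabilityMeasure P]
    (M : ℝ) (hM : 0 < M) (hP : mbounded P M) (hsupp : suppGT P k)
    (sel : (Fin k → H) → Fin k → H) (hsel : ∀ c, sel c ∈ qopt k P)
    (Mbar : Finset (Fin k → H)) (hMbar : ↑Mbar ⊆ qopt k P)
    (hMbar' : ∀ c ∈ qopt k P, ∃ c' ∈ Mbar, Set.range c = Set.range c')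
    (n : ℕ) (hn : 0 < n) (δ : ℝ) (hδ : 0 ≤ δ) :
    (∫ ω : Fin n → H,
        (⨆ c : {c : Fin k → H //
            (∀ i, ‖c i‖ ≤ M) ∧ 16 * M ^ 2 * ∑ i, ‖c i - sel c i‖ ^ 2 ≤ δ},
          |(∫ x, (qgamma k c.1 x - qgamma k (sel c.1) x) ∂P) -
            (∑ j, (qgamma k c.1 (ω j) - qgamma k (sel c.1) (ω j))) / n|)
      ∂(Measure.pi fun _ : Fin n => P)) ≤
      (4 * √k + √(2 * Real.log Mbar.card)) * √δ / √n := by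
  have : NeZero k := ⟨hk.ne'⟩
  have hball (cs) (hcs : cs ∈ Mbar) : ∀ i, ‖cs i‖ ≤ M :=
    norm_le_of_mem_qopt hM hP hsupp (hMbar hcs)
  obtain ⟨c₀, hc₀, -⟩ := hMbar' _ (hsel 0)
  refine le_trans (integral_mono_of_nonneg
    (.of_forall fun ω => Real.iSup_nonneg fun _ => abs_nonneg _)
    (integrable_finset_sup' ⟨c₀, hc₀⟩ fun cs hcs =>
      integrable_localDeviation P hM (hball cs hcs) hδ) ?_)
    (integral_sup'_localDeviation_le P hM hδ hn.ne' ⟨c₀, hc₀⟩ hball)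
  filter_upwards [ae_pi_norm_le_of_mbounded hP] with ω hω
  have hsup {cs} (hcs : cs ∈ Mbar) := Finset.le_sup' (localDeviation P M δ · ω) hcs
  refine Real.iSup_le (fun c => ?_) ((Real.iSup_nonneg fun _ => abs_nonneg _).trans (hsup hc₀))
  obtain ⟨cs, hcs, hrange⟩ := hMbar' _ (hsel c)
  exact (abs_integral_sub_sum_div_le_localDeviation_of_range_eq hM hP (hball cs hcs)
    (injective_of_mem_qopt hP hsupp (hMbar hcs)) hrange c.2 hω).trans (hsup hcs)

/-- Proposition 4.6: Gaussian-complexity bound on the localized complexity of the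
class `{γ(c,·) − γ(c*(c),·) : c ∈ B(0,M)^k}`. -/
theorem stmt14 [BorelSpace H] [SecondCountableTopology H] [CompleteSpace H]
    (k : ℕ) (hk : 2 ≤ k) (P : Measure H) [IsProbabilityMeasure P]
    (M : ℝ) (hM : 0 < M) (hsupp : suppGT P k) (hne : (qopt k P).Nonempty)
    (r0 : ℝ) (hmargin : margin k P M r0)
    -- `sel c` is a nearest optimal codebook to `c`
    (sel : (Fin k → H) → Fin k → H)
    (hsel : ∀ c : Fin k → H, sel c ∈ qopt k P ∧
      ∀ cs ∈ qopt k P, ∑ i, ‖c i - sel c i‖ ^ 2 ≤ ∑ i, ‖c i - cs i‖ ^ 2)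
    -- `Mbar` : the optimal codebooks up to relabeling
    (Mbar : Finset (Fin k → H)) (hMbar : ↑Mbar ⊆ qopt k P)
    (hMbar' : ∀ c ∈ qopt k P, ∃ c' ∈ Mbar, Set.range c = Set.range c')
    (hMbar'' : ∀ c ∈ Mbar, ∀ c' ∈ Mbar, Set.range c = Set.range c' → c = c')
    (n : ℕ) (hn : 0 < n) (δ : ℝ) (hδ : 0 < δ) :
    (∫ ω : Fin n → H,
        (⨆ c : {c : Fin k → H //
            (∀ i, ‖c i‖ ≤ M) ∧ 16 * M ^ 2 * ∑ i, ‖c i - sel c i‖ ^ 2 ≤ δ},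
          |(∫ x, (qgamma k c.1 x - qgamma k (sel c.1) x) ∂P) -
            (∑ j, (qgamma k c.1 (ω j) - qgamma k (sel c.1) (ω j))) / n|)
      ∂(Measure.pi fun _ : Fin n => P)) ≤
      (4 * Real.sqrt (Real.pi * k) + Real.sqrt (2 * Real.log Mbar.card)) *
        Real.sqrt δ / Real.sqrt n := by
  refine (stmt14_general k (by omega) P M hM hmargin.2.1 hsupp sel (fun c => (hsel c).1) Mbar hMbar
    hMbar' n hn δ hδ.le).trans ?_
  gcongr
  exact le_mul_of_one_le_left (Nat.cast_nonneg k) (by linarith [Real.pi_gt_three])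

end
end
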